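/- arXiv:1510.06964 — 2 statements merged into one kernel-verified Lean document; each statement's English description precedes it below -/
import Mathlib

section
/- Let G be a connected graph in which some block is neither a complete graph nor an odd cycle. Then G is degree-choosable: for every list assignment L with |L(v)| equal to the degree of v for every vertex v, G admits a proper colouring in which each vertex receives a colour from its list. -/
open SimpleGraph
open scoped Classical

variable {V : Type*}

/-- A proper `k`-colouring of `G`. -/
def IsProperColoring (G : SimpleGraph V) (k : ℕ) (c : V → Fin k) : Prop :=
  ∀ ⦃u v : V⦄, G.Adj u v → c u ≠ c v

/-- `c'` is obtained from `c` by a single Kempe change: the colours `a` and `b` are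
swapped on the connected component (of the subgraph induced by the vertices coloured
`a` or `b`) containing `v0`, and all other vertices keep their colour. -/

def KempeStep (G : SimpleGraph V) (k : ℕ) (c c' : V → Fin k) : Prop :=
  ∃ a b : Fin k, ∃ v0 : {x : V | c x = a ∨ c x = b},
    ∀ v : V, c' v =
      if h : c v = a ∨ c v = b then
        if (G.induce {x : V | c x = a ∨ c x = b}).Reachable v0 ⟨v, h⟩
          then Equiv.swap a b (c v) else c v
      else c v

/-- Two colourings are Kempe equivalent if one is obtained from the other by a finite
sequence of Kempe changes. -/
def KempeEquiv (G : SimpleGraph V) (k : ℕ) (c c' : V → Fin k) : Prop :=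
  Relation.ReflTransGen (KempeStep G k) c c'

/-- The set of all proper `k`-colourings of `G` forms a single Kempe class. -/
def KempeClass (G : SimpleGraph V) (k : ℕ) : Prop :=
  ∀ c c' : V → Fin k, IsProperColoring G k c → IsProperColoring G k c' →
    KempeEquiv G k c c'

/-- `G` is `d`-degenerate: every nonempty set of vertices contains a vertex with at
most `d` neighbours inside the set. -/
def Degenerate (G : SimpleGraph V) (d : ℕ) : Prop :=
  ∀ S : Set V, S.Nonempty → ∃ v ∈ S, (S ∩ G.neighborSet v).ncard ≤ d

/-- `G` is 3-connected: more than 3 vertices, and deleting any at most 2 vertices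
leaves it connected. -/
def ThreeConnected [Fintype V] (G : SimpleGraph V) : Prop :=
  3 < Fintype.card V ∧ ∀ S : Set V, S.ncard ≤ 2 → (G.induce Sᶜ).Connected

/-- `B` is a block of `G`: a maximal set of vertices inducing a connected subgraph
with no cut-vertex. -/
def IsBlock (G : SimpleGraph V) (B : Set V) : Prop :=
  (G.induce B).Connected ∧
  (∀ x ∈ B, (G.induce (B \ {x})).Connected ∨ B \ {x} = ∅) ∧
  ∀ B' : Set V, B ⊆ B' →
    ((G.induce B').Connected ∧
      ∀ x ∈ B', (G.induce (B' \ {x})).Connected ∨ B' \ {x} = ∅) → B' = B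

/-!
By connectedness, everything outside the given block can be coloured greedily towards the block, and
this leaves every vertex of the block with at least as many colours as it has uncoloured neighbours.
So let `G` itself have no cut vertex. If a vertex `v` has a colour that is missing from the list of
a neighbour `u`, then giving `v` that colour costs `u` nothing, and the rest can be coloured
greedily towards `u`. Hence we may assume that all lists are equal and that `G` is `k`-regular.

If `k = 2`, then `G` is a cycle, of even length by assumption. If `k ≥ 3`, choose an induced path
`x v y` and extend it to a path `P` ending in a vertex `z` all of whose neighbours lie on `P`, as in
Zając's proof of Brooks' theorem. The part of `P` from the first neighbour of `z` onwards spans a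
cycle `C`. If `C` misses a vertex, then along `C` some `s` without neighbours outside `C` is
adjacent to some `t` with such a neighbour, and colouring the outside first makes the lists of `s`
and `t` different. If `C` is everything, then `P` minus `x` and `y` is connected because `v` has a
third neighbour; give `x` and `y` the same colour and colour the rest greedily towards `v`.
-/

open scoped Finset

section Definitions

variable {α : Type*}

/-- `G` has a proper colouring in which every vertex `v` receives a colour from its list `L v`. -/
def ListColorable (G : SimpleGraph V) (L : V → Finset α) : Prop :=
  ∃ C : G.Coloring α, ∀ v, C v ∈ L v

/-- `G` is degree-choosable with respect to colours from `α`: it is colourable from all lists that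
are at least as long as the degrees. -/
def IsDegreeChoosable (α : Type*) (G : SimpleGraph V) [Fintype V] [DecidableRel G.Adj] : Prop :=
  ∀ L : V → Finset α, (∀ v, G.degree v ≤ #(L v)) → ListColorable G L

/-- A graph is nonseparable if it is connected and has no cut vertex; the blocks of a graph are its
maximal nonseparable induced subgraphs. The one-vertex graph counts as nonseparable, so deleting a
vertex is only required to leave a preconnected graph. -/
structure IsNonseparable (G : SimpleGraph V) : Prop where
  connected : G.Connected
  preconnected_induce_compl (v : V) : (G.induce {v}ᶜ).Preconnected

/-- `c` is a proper colouring of `G - S` from the lists `L`. It is a function on all of `V` whose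
values on `S` are irrelevant. -/
structure IsPrecoloring (G : SimpleGraph V) (L : V → Finset α) (S : Set V) (c : V → α) :
    Prop where
  mem : ∀ v ∉ S, c v ∈ L v
  ne : ∀ u ∉ S, ∀ v ∉ S, G.Adj u v → c u ≠ c v

/-- The colours from the list of `v` that remain when all neighbours of `v` outside `S` are coloured
by `c`. -/
noncomputable def availableColors (G : SimpleGraph V) [Fintype V] [DecidableRel G.Adj]
    (L : V → Finset α) (S : Set V) (c : V → α) (v : V) : Finset α :=
  L v \ {u ∈ G.neighborFinset v | u ∉ S}.image c

end Definitions

section Precoloring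

variable {α : Type*} [Fintype V] {G : SimpleGraph V} [DecidableRel G.Adj] {L : V → Finset α}
  {S : Set V} {c : V → α}

theorem mem_availableColors {v : V} {a : α} :
    a ∈ availableColors G L S c v ↔ a ∈ L v ∧ ∀ u ∉ S, G.Adj v u → c u ≠ a := by
  simp only [availableColors, Finset.mem_sdiff, Finset.mem_image, Finset.mem_filter,
    mem_neighborFinset]
  grind

theorem IsPrecoloring.listColorable (hc : IsPrecoloring G L S c)
    (h : ListColorable (G.induce S) fun v ↦ availableColors G L S c v) : ListColorable G L := by
  obtain ⟨D, hD⟩ := h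
  simp only [mem_availableColors] at hD
  refine ⟨Coloring.mk (fun v ↦ if hv : v ∈ S then D ⟨v, hv⟩ else c v) ?_, fun v ↦ ?_⟩
  · intro u v huv
    by_cases hu : u ∈ S <;> by_cases hv : v ∈ S <;> simp only [hu, hv, dite_true, dite_false]
    · exact D.valid (v := ⟨u, hu⟩) (w := ⟨v, hv⟩) huv
    · exact ((hD ⟨u, hu⟩).2 v hv huv).symm
    · exact (hD ⟨v, hv⟩).2 u hu huv.symm
    · exact hc.ne u hu v hv huv
  · change (if hv : v ∈ S then D ⟨v, hv⟩ else c v) ∈ L v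
    split_ifs with hv
    exacts [(hD ⟨v, hv⟩).1, hc.mem v hv]

theorem degree_induce_add_card_neighborFinset_filter_notMem (v : S) :
    (G.induce S).degree v + #{u ∈ G.neighborFinset v | u ∉ S} = G.degree v := by
  have h : #{u ∈ G.neighborFinset v | u ∈ S} = (G.induce S).degree v := by
    rw [← card_neighborFinset_eq_degree, ← Finset.card_map (.subtype (· ∈ S)),
      map_neighborFinset_induce]
    congr 1
    ext u
    simp
  rw [← h, Finset.card_filter_add_card_filter_not, card_neighborFinset_eq_degree]

theorem degree_induce_le_card_availableColors {v : S} (h : G.degree v ≤ #(L v)) :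
    (G.induce S).degree v ≤ #(availableColors G L S c v) := by
  have hdeg := degree_induce_add_card_neighborFinset_filter_notMem (G := G) v
  have himage := Finset.card_image_le (s := {u ∈ G.neighborFinset v | u ∉ S}) (f := c)
  have hsdiff := Finset.le_card_sdiff ({u ∈ G.neighborFinset v | u ∉ S}.image c) (L v)
  rw [availableColors]
  lia

theorem degree_induce_lt_card_availableColors_of_notMem {u : V} {v : S}
    (h : G.degree v ≤ #(L v)) (hu : u ∉ S) (huv : G.Adj v u) (hcu : c u ∉ L v) :
    (G.induce S).degree v < #(availableColors G L S c v) := by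
  have hdeg := degree_induce_add_card_neighborFinset_filter_notMem (G := G) v
  have hinter : #(L v ∩ {u ∈ G.neighborFinset v | u ∉ S}.image c) <
      #({u ∈ G.neighborFinset v | u ∉ S}.image c) := by
    refine Finset.card_lt_card ⟨Finset.inter_subset_right, fun hsub ↦ hcu ?_⟩
    exact (Finset.mem_inter.1 (hsub (Finset.mem_image_of_mem c (by simp [hu, huv])))).1
  have himage := Finset.card_image_le (s := {u ∈ G.neighborFinset v | u ∉ S}) (f := c)
  have hsdiff := Finset.card_sdiff_add_card_inter (L v) ({u ∈ G.neighborFinset v | u ∉ S}.image c)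
  rw [availableColors]
  lia

theorem degree_induce_lt_card_availableColors_of_eq {u w : V} {v : S} (h : G.degree v ≤ #(L v))
    (hu : u ∉ S) (hw : w ∉ S) (hvu : G.Adj v u) (hvw : G.Adj v w) (huw : u ≠ w)
    (hc : c u = c w) : (G.induce S).degree v < #(availableColors G L S c v) := by
  have hdeg := degree_induce_add_card_neighborFinset_filter_notMem (G := G) v
  have himage : #({u ∈ G.neighborFinset v | u ∉ S}.image c) <
      #{u ∈ G.neighborFinset v | u ∉ S} := by
    refine lt_of_le_of_ne Finset.card_image_le fun heq ↦ huw ?_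
    exact Finset.card_image_iff.1 heq (by simp [hu, hvu]) (by simp [hw, hvw]) hc
  have hsdiff := Finset.le_card_sdiff ({u ∈ G.neighborFinset v | u ∉ S}.image c) (L v)
  rw [availableColors]
  lia

end Precoloring

section Greedy

variable {α : Type*} {G : SimpleGraph V} {L : V → Finset α} {S : Set V}

theorem exists_adj_mem_notMem_of_connected (hG : G.Connected) (hS : S.Nonempty)
    (hS' : S ≠ Set.univ) : ∃ u ∈ S, ∃ v ∉ S, G.Adj u v := by
  obtain ⟨a, ha⟩ := hS
  obtain ⟨b, hb⟩ := (Set.ne_univ_iff_exists_notMem S).1 hS'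
  obtain ⟨p⟩ := hG.preconnected a b
  obtain ⟨d, -, hu, hv⟩ := p.exists_boundary_dart S ha hb
  exact ⟨d.fst, hu, d.snd, hv, d.adj⟩

theorem IsPrecoloring.update {u : V} {a : α} {c : V → α} (hc : IsPrecoloring G L (insert u S) c)
    (ha : a ∈ L u) (hau : ∀ v ∉ insert u S, G.Adj u v → c v ≠ a) :
    IsPrecoloring G L S (Function.update c u a) where
  mem v hv := by
    by_cases hvu : v = u
    · simpa [hvu] using ha
    · simpa [hvu] using hc.mem v (by simp [hvu, hv])
  ne v hv w hw hvw := by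
    have hne := hvw.ne
    by_cases hvu : v = u <;> by_cases hwu : w = u
    · grind
    · subst hvu
      simpa [hwu] using (hau w (by simp [hwu, hw]) hvw).symm
    · subst hwu
      simpa [hvu] using hau v (by simp [hvu, hv]) hvw.symm
    · simpa [hvu, hwu] using hc.ne v (by simp [hvu, hv]) w (by simp [hwu, hw]) hvw

variable [Fintype V] [DecidableRel G.Adj]

theorem exists_isPrecoloring_of_connected [Nonempty α] (hG : G.Connected)
    (hL : ∀ v, G.degree v ≤ #(L v)) (hS : S.Nonempty) : ∃ c, IsPrecoloring G L S c := by
  induction S using WellFoundedGT.induction with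
  | ind S ih =>
    by_cases hS' : S = Set.univ
    · obtain ⟨a⟩ := ‹Nonempty α›
      exact ⟨fun _ ↦ a, by simp [hS'], by simp [hS']⟩
    obtain ⟨v, hv, u, hu, hvu⟩ := exists_adj_mem_notMem_of_connected hG hS hS'
    obtain ⟨c, hc⟩ := ih (insert u S) (Set.ssubset_insert hu) (Set.insert_nonempty u S)
    -- The neighbour `v` of `u` is still uncoloured, so the list of `u` is not exhausted.
    have hlt : #({w ∈ G.neighborFinset u | w ∉ insert u S}.image c) < #(L u) :=
      calc #({w ∈ G.neighborFinset u | w ∉ insert u S}.image c)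
        _ ≤ #{w ∈ G.neighborFinset u | w ∉ insert u S} := Finset.card_image_le
        _ < #(G.neighborFinset u) := Finset.card_lt_card <|
          Finset.filter_ssubset.2 ⟨v, by simpa using hvu.symm, by simp [hv]⟩
        _ ≤ #(L u) := hL u
    obtain ⟨a, ha, hac⟩ := Finset.exists_mem_notMem_of_card_lt_card hlt
    exact ⟨_, hc.update ha fun w hw huw hcw ↦
      hac (Finset.mem_image.2 ⟨w, Finset.mem_filter.2 ⟨by simpa using huw, hw⟩, hcw⟩)⟩

theorem listColorable_of_degree_lt (hG : G.Connected) (hL : ∀ v, G.degree v ≤ #(L v)) {w : V}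
    (hw : G.degree w < #(L w)) : ListColorable G L := by
  have hα : Nonempty α := (Finset.card_pos.1 (Nat.zero_lt_of_lt hw)).nonempty
  obtain ⟨c, hc⟩ := exists_isPrecoloring_of_connected hG hL (Set.singleton_nonempty w)
  have hlt : #({u ∈ G.neighborFinset w | u ∉ ({w} : Set V)}.image c) < #(L w) :=
    (Finset.card_image_le.trans (Finset.card_filter_le _ _)).trans_lt hw
  obtain ⟨a, ha, hac⟩ := Finset.exists_mem_notMem_of_card_lt_card hlt
  refine hc.listColorable ⟨Coloring.mk (fun _ ↦ a) fun {u v} huv ↦ ?_, ?_⟩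
  · exact absurd (Subsingleton.elim u v) huv.ne
  · rintro ⟨_, rfl⟩
    exact Finset.mem_sdiff.2 ⟨ha, hac⟩

theorem IsDegreeChoosable.of_induce (hG : G.Connected) (hS : S.Nonempty)
    (h : IsDegreeChoosable α (G.induce S)) : IsDegreeChoosable α G := by
  intro L hL
  have hα : Nonempty α := by
    obtain ⟨v, hv⟩ := hS
    have hdeg (u : S) := degree_induce_add_card_neighborFinset_filter_notMem (G := G) u
    obtain ⟨C, -⟩ := h (fun u ↦ L u) fun u ↦ (Nat.le_of_add_right_le (hdeg u).le).trans (hL u)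
    exact ⟨C ⟨v, hv⟩⟩
  obtain ⟨c, hc⟩ := exists_isPrecoloring_of_connected hG hL hS
  exact hc.listColorable (h _ fun v ↦ degree_induce_le_card_availableColors (hL v))

theorem IsPrecoloring.listColorable_of_degree_lt {c : V → α} (hc : IsPrecoloring G L S c)
    (hS : (G.induce S).Connected) (hL : ∀ v, G.degree v ≤ #(L v)) {w : S}
    (hw : (G.induce S).degree w < #(availableColors G L S c w)) : ListColorable G L :=
  hc.listColorable <| _root_.listColorable_of_degree_lt hS
    (fun v ↦ degree_induce_le_card_availableColors (hL v)) hw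

theorem listColorable_of_adj_of_mem_of_notMem {u v : V} {a : α}
    (hv : (G.induce {v}ᶜ).Preconnected) (hL : ∀ w, G.degree w ≤ #(L w)) (hvu : G.Adj v u)
    (hav : a ∈ L v) (hau : a ∉ L u) : ListColorable G L := by
  have hc : IsPrecoloring G L {v}ᶜ fun _ ↦ a := by constructor <;> simp [hav]
  have hu : u ∈ ({v}ᶜ : Set V) := hvu.ne'
  have hconn : (G.induce {v}ᶜ).Connected := connected_iff _ |>.2 ⟨hv, ⟨u, hu⟩⟩
  exact hc.listColorable_of_degree_lt hconn hL (w := ⟨u, hu⟩)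
    (degree_induce_lt_card_availableColors_of_notMem (hL u) (by simp) hvu.symm hau)

theorem listColorable_of_common_color {v x y : V} {a : α} (hxy : (G.induce {x, y}ᶜ).Connected)
    (hL : ∀ w, G.degree w ≤ #(L w)) (hne : x ≠ y) (hadj : ¬ G.Adj x y) (hvx : G.Adj v x)
    (hvy : G.Adj v y) (hax : a ∈ L x) (hay : a ∈ L y) : ListColorable G L := by
  have hc : IsPrecoloring G L {x, y}ᶜ fun _ ↦ a := by
    refine ⟨fun w hw ↦ ?_, fun u hu w hw huw ↦ ?_⟩
    · obtain rfl | rfl : w = x ∨ w = y := not_not.1 hw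
      exacts [hax, hay]
    · obtain rfl | rfl : u = x ∨ u = y := not_not.1 hu <;>
        obtain rfl | rfl : w = _ ∨ w = _ := not_not.1 hw
      exacts [(huw.ne rfl).elim, (hadj huw).elim, (hadj huw.symm).elim, (huw.ne rfl).elim]
  have hv : v ∈ ({x, y}ᶜ : Set V) := by simp [hvx.ne, hvy.ne]
  exact hc.listColorable_of_degree_lt hxy hL (w := ⟨v, hv⟩)
    (degree_induce_lt_card_availableColors_of_eq (hL v) (by simp) (by simp) hvx hvy hne rfl)

end Greedy

section Nonseparable

variable {α : Type*} {G : SimpleGraph V}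

theorem IsNonseparable.exists_forall_eq_of_not_listColorable [Fintype V] [DecidableRel G.Adj]
    (hG : IsNonseparable G) {L : V → Finset α} (hL : ∀ v, G.degree v ≤ #(L v))
    (h : ¬ ListColorable G L) : ∃ T, ∀ v, L v = T ∧ G.degree v = #T := by
  have hadj (u v : V) (huv : G.Adj u v) : L u ⊆ L v := by
    intro a ha
    by_contra hav
    exact h (listColorable_of_adj_of_mem_of_notMem (hG.preconnected_induce_compl u) hL huv ha hav)
  have hle (u v : V) : L u ⊆ L v := by
    obtain ⟨p⟩ := hG.connected.preconnected u v
    induction p with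
    | nil => exact subset_rfl
    | cons huv _ ih => exact (hadj _ _ huv).trans ih
  obtain ⟨w⟩ := hG.connected.nonempty
  refine ⟨L w, fun v ↦ ⟨(hle v w).antisymm (hle w v), ?_⟩⟩
  rw [← (hle v w).antisymm (hle w v)]
  exact (hL v).eq_of_not_lt fun hlt ↦ h (listColorable_of_degree_lt hG.connected hL hlt)

theorem isNonseparable_induce {S : Set V} (hS : (G.induce S).Connected)
    (h : ∀ x ∈ S, (G.induce (S \ {x})).Preconnected) : IsNonseparable (G.induce S) where
  connected := hS
  preconnected_induce_compl v := by
    let f : G.induce (S \ {↑v}) →g (G.induce S).induce {v}ᶜ :=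
      ⟨fun u ↦ ⟨⟨u, u.2.1⟩, fun huv ↦ u.2.2 (congrArg Subtype.val huv)⟩, id⟩
    refine (h v v.2).map f fun u ↦ ?_
    exact ⟨⟨u, u.1.2, fun huv ↦ u.2 (Subtype.ext huv)⟩, rfl⟩

theorem isNonseparable_induce_support {v : V} (c : G.Walk v v) (hc : c.support.tail.Nodup) :
    IsNonseparable (G.induce {u | u ∈ c.support}) := by
  refine isNonseparable_induce c.connected_induce_support fun u hu ↦ ?_
  -- Rotate `c` so that it starts at `u`; the rest of it is then a walk avoiding `u`.
  obtain ⟨c', hc', hsupp⟩ : ∃ c' : G.Walk u u, c'.support.tail.Nodup ∧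
      {w | w ∈ c.support} = {w | w ∈ c'.support} :=
    ⟨c.rotate u hu, (c.support_rotate u hu).perm.nodup_iff.2 hc,
      Set.ext fun w ↦ (c.mem_support_rotate_iff u hu).symm⟩
  rw [hsupp]
  cases c' with
  | nil =>
    rintro ⟨w, hw, hwu⟩
    exact absurd (Walk.mem_support_nil_iff.1 hw) hwu
  | cons h q =>
    obtain ⟨r, rfl⟩ : ∃ r, q = Walk.reverse r := ⟨q.reverse, q.reverse_reverse.symm⟩
    cases r with
    | nil => exact absurd rfl h.ne
    | cons h' r =>
      have hr : (u :: r.support).Nodup := by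
        rw [← Walk.support_cons h' r, ← List.nodup_reverse, ← Walk.support_reverse]
        exact hc'
      have hset : {w | w ∈ (Walk.cons h (r.cons h').reverse).support} \ {u} =
          {w | w ∈ r.support} := by
        ext w
        simp only [Walk.support_cons, Walk.support_reverse, Set.mem_sdiff, Set.mem_ofPred_eq,
          Set.mem_singleton_iff, List.mem_cons, List.mem_reverse]
        grind
      rw [hset]
      exact r.connected_induce_support.preconnected

theorem isNonseparable_induce_support_of_isPath {u v : V} {p : G.Walk u v} (hp : p.IsPath)
    (hvu : G.Adj v u) : IsNonseparable (G.induce {w | w ∈ p.support}) := by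
  have hset : {w | w ∈ p.support} = {w | w ∈ (Walk.cons hvu p).support} := by
    ext w
    simpa using fun h : w = v ↦ h ▸ p.end_mem_support
  rw [hset]
  exact isNonseparable_induce_support _ hp.support_nodup

end Nonseparable

section Paths

variable {G : SimpleGraph V}

theorem exists_isPath_append_forall_adj_mem_support [Finite V] {x y : V} {p : G.Walk x y}
    (hp : p.IsPath) : ∃ (z : V) (q : G.Walk y z), (p.append q).IsPath ∧
      ∀ w, G.Adj z w → w ∈ (p.append q).support := by
  by_cases h : ∀ w, G.Adj y w → w ∈ p.support
  · exact ⟨y, .nil, by simpa using hp, by simpa using h⟩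
  · push Not at h
    obtain ⟨w, hyw, hw⟩ := h
    obtain ⟨z, q, hq, hz⟩ := exists_isPath_append_forall_adj_mem_support (hp.concat hw hyw)
    rw [Walk.concat_append] at hq hz
    exact ⟨z, .cons hyw q, hq, hz⟩
termination_by Nat.card V - p.length
decreasing_by
  have hfin := Fintype.ofFinite V
  have hlt := (hp.concat hw hyw).length_lt
  rw [Walk.length_concat, ← Nat.card_eq_fintype_card] at *
  lia

theorem exists_eq_append_of_exists_mem_support {x z : V} (p : G.Walk x z) {P : V → Prop}
    (h : ∃ w ∈ p.support, P w) : ∃ (u : V) (q : G.Walk x u) (r : G.Walk u z),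
      p = q.append r ∧ P u ∧ ∀ w ∈ p.support, P w → w ∈ r.support := by
  induction p with
  | @nil x =>
    obtain ⟨w, hw, hPw⟩ := h
    obtain rfl := Walk.mem_support_nil_iff.1 hw
    exact ⟨w, .nil, .nil, rfl, hPw, fun _ hw _ ↦ hw⟩
  | @cons x y z hxy p ih =>
    by_cases hx : P x
    · exact ⟨x, .nil, .cons hxy p, rfl, hx, fun _ hw _ ↦ hw⟩
    have htail : ∀ w ∈ (Walk.cons hxy p).support, P w → w ∈ p.support := by
      intro w hw hPw
      exact (List.mem_cons.1 hw).resolve_left fun hwx ↦ hx (hwx ▸ hPw)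
    obtain ⟨w, hw, hPw⟩ := h
    obtain ⟨u, q, r, rfl, hu, hr⟩ := ih ⟨w, htail w hw hPw, hPw⟩
    exact ⟨u, .cons hxy q, r, rfl, hu, fun w hw hPw ↦ hr w (htail w hw hPw) hPw⟩

theorem connected_induce_compl_pair_of_isPath {x v y z w : V} {hxv : G.Adj x v} {hvy : G.Adj v y}
    {q : G.Walk y z} (hq : (Walk.cons hxv (.cons hvy q)).IsPath)
    (hcover : ∀ a, a ∈ (Walk.cons hxv (.cons hvy q)).support) (hvw : G.Adj v w) (hwx : w ≠ x)
    (hwy : w ≠ y) : (G.induce {x, y}ᶜ).Connected := by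
  have hnodup := hq.support_nodup
  simp only [Walk.support_cons, List.mem_cons] at hcover hnodup
  have hwv := hvw.ne'
  cases q with
  | nil =>
    have hw := hcover w
    simp_all
  | cons hy r =>
    have hset : ({x, y}ᶜ : Set V) = {v} ∪ {a | a ∈ r.support} := by
      ext a
      have ha := hcover a
      simp only [Walk.support_cons, List.mem_cons, List.nodup_cons] at ha hnodup
      simp only [Set.mem_compl_iff, Set.mem_insert_iff, Set.mem_singleton_iff, Set.mem_union,
        Set.mem_ofPred_eq]
      grind
    have hw : w ∈ r.support := by
      have hmem := hcover w
      simp_all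
    rw [hset]
    exact connected_induce_union (by simp) r.connected_induce_support.preconnected rfl hw hvw

theorem exists_adj_adj_not_adj_ne_of_ne_top (hG : G.Connected) (h : G ≠ ⊤) :
    ∃ x v y, G.Adj x v ∧ G.Adj v y ∧ ¬ G.Adj x y ∧ x ≠ y := by
  obtain ⟨a, b, hab, hadj⟩ := ne_top_iff_exists_not_adj.1 h
  obtain ⟨p, hp⟩ := hG.exists_walk_length_eq_dist a b
  exact p.exists_adj_adj_not_adj_ne hp <|
    (hG.preconnected a b).one_lt_dist_of_ne_of_not_adj hab hadj

end Paths

section Brooks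

variable {α : Type*} [Fintype V] {G : SimpleGraph V} [DecidableRel G.Adj] {T : Finset α}

theorem listColorable_const_of_forall_adj_mem (hG : G.Connected) (hT : ∀ v, G.degree v ≤ #T)
    {S : Set V} (hS : IsNonseparable (G.induce S)) (hS' : S ≠ Set.univ) {z : V} (hz : z ∈ S)
    (hzS : ∀ w, G.Adj z w → w ∈ S) : ListColorable G fun _ ↦ T := by
  let A : Set S := {v | ∀ w, G.Adj v w → w ∈ S}
  obtain ⟨u, hu, v, hv, huv⟩ := exists_adj_mem_notMem_of_connected hG ⟨z, hz⟩ hS'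
  have hA : A ≠ Set.univ := (Set.ne_univ_iff_exists_notMem A).2 ⟨⟨u, hu⟩, fun h ↦ hv (h v huv)⟩
  have hA' : A.Nonempty := ⟨⟨z, hz⟩, hzS⟩
  obtain ⟨s, hs, t, ht, hst⟩ := exists_adj_mem_notMem_of_connected hS.connected hA' hA
  obtain ⟨w, htw, hw⟩ : ∃ w, G.Adj t w ∧ w ∉ S := by simpa [A] using ht
  have hα : Nonempty α :=
    (Finset.card_pos.1 (((G.degree_pos_iff_exists_adj s).2 ⟨t, hst⟩).trans_le (hT s))).nonempty
  obtain ⟨c, hc⟩ := exists_isPrecoloring_of_connected (L := fun _ ↦ T) hG hT ⟨z, hz⟩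
  refine hc.listColorable <| listColorable_of_adj_of_mem_of_notMem (a := c w)
    (hS.preconnected_induce_compl s) (fun v ↦ degree_induce_le_card_availableColors (hT v))
    hst ?_ ?_
  · exact mem_availableColors.2 ⟨hc.mem w hw, fun b hb hsb ↦ absurd (hs b hsb) hb⟩
  · exact fun h ↦ (mem_availableColors.1 h).2 w hw htw rfl

theorem listColorable_const_of_ne_top (hG : G.Connected) (hG' : G ≠ ⊤)
    (hdeg : ∀ v, G.degree v ≤ #T) (hT : 3 ≤ #T) : ListColorable G fun _ ↦ T := by
  obtain ⟨x, v, y, hxv, hvy, hxy, hne⟩ := exists_adj_adj_not_adj_ne_of_ne_top hG hG'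
  obtain hlt | heq := (hdeg v).lt_or_eq
  · exact listColorable_of_degree_lt hG hdeg hlt
  have hpath : (Walk.cons hxv (.cons hvy .nil)).IsPath := by simp [hxv.ne, hvy.ne, hne]
  obtain ⟨z, q, hq, hz⟩ := exists_isPath_append_forall_adj_mem_support hpath
  have hV : Nontrivial V := ⟨x, y, hne⟩
  obtain ⟨b, hzb⟩ := hG.preconnected.exists_adj_of_nontrivial z
  obtain ⟨u, p, r, hpr, hzu, hr⟩ := exists_eq_append_of_exists_mem_support _ ⟨b, hz b hzb, hzb⟩
  by_cases hcover : {w | w ∈ r.support} = Set.univ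
  · obtain ⟨w, hw, hwxy⟩ : ∃ w ∈ G.neighborFinset v, w ∉ ({x, y} : Finset V) := by
      refine Finset.exists_mem_notMem_of_card_lt_card (Finset.card_le_two.trans_lt ?_)
      rwa [card_neighborFinset_eq_degree, heq]
    have hvw : G.Adj v w := by simpa using hw
    obtain ⟨hwx, hwy⟩ : w ≠ x ∧ w ≠ y := by simpa using hwxy
    have hsupp (a : V) : a ∈ ((Walk.cons hxv (.cons hvy .nil)).append q).support :=
      hpr ▸ (Walk.mem_support_append_iff p r).2 (.inr (hcover.ge (Set.mem_univ a)))
    have hconn := connected_induce_compl_pair_of_isPath hq hsupp hvw hwx hwy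
    obtain ⟨a, ha⟩ : T.Nonempty := Finset.card_pos.1 (by lia)
    exact listColorable_of_common_color hconn hdeg hne hxy hxv.symm hvy ha ha
  · have hcycle := isNonseparable_induce_support_of_isPath (hpr ▸ hq).of_append_right hzu
    exact listColorable_const_of_forall_adj_mem hG hdeg hcycle hcover r.end_mem_support
      fun w hzw ↦ hr w (hz w hzw) hzw

end Brooks

section Cycle

variable [Fintype V] {G : SimpleGraph V} [DecidableRel G.Adj]

theorem nonempty_iso_of_copy {W : Type*} [Fintype W] [Nonempty W] {H : SimpleGraph W}
    [DecidableRel H.Adj] (hG : G.Connected) (f : Copy H G)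
    (hdeg : ∀ w, G.degree (f w) ≤ H.degree w) : Nonempty (H ≃g G) := by
  have hlift (w : W) (v : V) (hv : G.Adj (f w) v) : ∃ w', H.Adj w w' ∧ f w' = v := by
    have hmap : (H.neighborFinset w).map ⟨f, f.injective⟩ = G.neighborFinset (f w) := by
      refine Finset.eq_of_subset_of_card_le (fun v hv ↦ ?_) (by simpa using hdeg w)
      obtain ⟨w', hw', rfl⟩ := Finset.mem_map.1 hv
      simpa using f.toHom.map_adj (by simpa using hw')
    simpa [← mem_neighborFinset, ← hmap] using hv
  have hsurj : Function.Surjective f := by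
    by_contra! hf
    obtain ⟨_, ⟨w, rfl⟩, v, hv, hadj⟩ := exists_adj_mem_notMem_of_connected hG
      (Set.range_nonempty f) (mt Set.range_eq_univ.1 hf)
    obtain ⟨w', -, rfl⟩ := hlift w v hadj
    exact hv ⟨w', rfl⟩
  refine ⟨Equiv.ofBijective f ⟨f.injective, hsurj⟩, fun {a b} ↦ ⟨fun hab ↦ ?_, f.toHom.map_adj⟩⟩
  obtain ⟨w', hw', hw'b⟩ := hlift a _ hab
  exact f.injective hw'b ▸ hw'

theorem exists_iso_cycleGraph_of_isRegularOfDegree_two (hG : G.Connected)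
    (hdeg : G.IsRegularOfDegree 2) : ∃ n, Nonempty (cycleGraph n ≃g G) := by
  have hcyc : ¬ G.IsAcyclic := by
    intro h
    obtain ⟨v⟩ := hG.nonempty
    obtain ⟨w, hvw⟩ := (G.degree_pos_iff_exists_adj v).1 (by simp [hdeg v])
    have hV : Nontrivial V := ⟨v, w, hvw.ne⟩
    obtain ⟨u, hu⟩ := (IsTree.mk hG h).exists_vert_degree_one_of_nontrivial
    simp [hdeg u] at hu
  simp only [IsAcyclic, not_forall, not_not] at hcyc
  obtain ⟨v, c, hc⟩ := hcyc
  obtain ⟨f⟩ := (cycleGraph_isContained_iff hc.three_le_length).2 ⟨v, c, hc, rfl⟩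
  obtain ⟨n, hn⟩ := Nat.exists_eq_add_of_le' hc.three_le_length
  rw [hn] at f
  exact ⟨n + 3, nonempty_iso_of_copy hG f fun w ↦ by rw [hdeg, cycleGraph_degree_three_le]⟩

theorem colorable_two_of_isRegularOfDegree_two (hG : G.Connected) (hdeg : G.IsRegularOfDegree 2)
    (hodd : ¬ ∃ n, Odd n ∧ Nonempty (G ≃g cycleGraph n)) : G.Colorable 2 := by
  obtain ⟨n, ⟨f⟩⟩ := exists_iso_cycleGraph_of_isRegularOfDegree_two hG hdeg
  have hn : Even n := by
    by_contra hn
    exact hodd ⟨n, Nat.not_even_iff_odd.1 hn, ⟨f.symm⟩⟩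
  have hcol : (cycleGraph n).Colorable 2 := (cycleGraph.bicoloring_of_even n hn).colorable
  exact hcol.of_hom f.symm.toHom

end Cycle

section DegreeChoosable

variable {α : Type*}

theorem listColorable_const_of_colorable {G : SimpleGraph V} {T : Finset α}
    (h : G.Colorable #T) : ListColorable G fun _ ↦ T := by
  obtain ⟨C⟩ := h
  let e := T.equivFin.symm
  exact ⟨G.recolorOfEmbedding (e.toEmbedding.trans (.subtype _)) C, fun v ↦ (e (C v)).2⟩

variable [Fintype V] {G : SimpleGraph V} [DecidableRel G.Adj]

theorem IsNonseparable.isDegreeChoosable (hG : IsNonseparable G) (hG' : G ≠ ⊤)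
    (hodd : ¬ ∃ n, Odd n ∧ Nonempty (G ≃g cycleGraph n)) : IsDegreeChoosable α G := by
  intro L hL
  by_contra h
  obtain ⟨T, hT⟩ := hG.exists_forall_eq_of_not_listColorable hL h
  obtain rfl : L = fun _ ↦ T := funext fun v ↦ (hT v).1
  have htwo : 2 ≤ #T := by
    obtain ⟨x, v, y, hxv, hvy, -, hne⟩ :=
      exists_adj_adj_not_adj_ne_of_ne_top hG.connected hG'
    rw [← (hT v).2, ← card_neighborFinset_eq_degree]
    exact Finset.one_lt_card.2 ⟨x, by simpa using hxv.symm, y, by simpa using hvy, hne⟩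
  obtain htwo | hthree := htwo.eq_or_lt
  · have hcol := colorable_two_of_isRegularOfDegree_two hG.connected
      (fun v ↦ (hT v).2.trans htwo.symm) hodd
    exact h (listColorable_const_of_colorable (htwo ▸ hcol))
  · exact h (listColorable_const_of_ne_top hG.connected hG' hL hthree)

end DegreeChoosable

theorem IsBlock.isNonseparable {G : SimpleGraph V} {B : Set V} (hB : IsBlock G B) :
    IsNonseparable (G.induce B) := by
  refine isNonseparable_induce hB.1 fun x hx ↦ ?_
  obtain hconn | hempty := hB.2.1 x hx
  · exact hconn.preconnected
  · exact fun u ↦ (hempty.le u.2).elim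

theorem stmt7_general {α : Type*} [Fintype V] (G : SimpleGraph V) [DecidableRel G.Adj]
    (hconn : G.Connected) (B : Set V) (hB : IsNonseparable (G.induce B))
    (hnotcomplete : G.induce B ≠ ⊤)
    (hnotoddcycle : ¬ ∃ n, Odd n ∧ Nonempty (G.induce B ≃g cycleGraph n)) :
    IsDegreeChoosable α G :=
  .of_induce hconn (Set.nonempty_coe_sort.1 hB.connected.nonempty)
    (hB.isDegreeChoosable hnotcomplete hnotoddcycle)

/-- a connected graph having a block that is neither complete nor an odd
cycle is degree-choosable. -/
theorem stmt7 {V : Type*} [Fintype V] [DecidableEq V] (G : SimpleGraph V)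
    [DecidableRel G.Adj] (hconn : G.Connected)
    (B : Set V) (hB : IsBlock G B)
    (hnotcomplete : G.induce B ≠ ⊤)
    (hnotoddcycle : ¬ ∃ n : ℕ, Odd n ∧ Nonempty (G.induce B ≃g SimpleGraph.cycleGraph n)) :
    ∀ L : V → Finset ℕ, (∀ v : V, (L v).card = G.degree v) →
      ∃ c : V → ℕ, (∀ v : V, c v ∈ L v) ∧ ∀ ⦃x y : V⦄, G.Adj x y → c x ≠ c y := by
  intro L hL
  obtain ⟨C, hC⟩ := stmt7_general G hconn B hB.isNonseparable hnotcomplete hnotoddcycle L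
    fun v ↦ (hL v).ge
  exact ⟨C, hC, fun _ _ hxy ↦ C.valid hxy⟩
end

section
/- Let k ≥ 4 be an integer and let G be a connected k-regular graph that is not 3-connected. Then the set of proper k-colourings of G forms a single Kempe class. -/
open SimpleGraph
open scoped Classical

variable {V : Type*}

/-!
A graph that is `d`-degenerate for some `d < k` has a single Kempe class (Las Vergnas and Meyniel):
when `v` has fewer than `k` neighbours, every Kempe change of `G - v` extends to `G`. The same holds
for two graphs with a single Kempe class glued along a clique: a chain of one side contains all or
none of the clique vertices of its two colours, so swapping it extends to the other side up to a
renaming of the colours.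

In a connected `k`-regular graph every proper induced subgraph is `(k - 1)`-degenerate, so it
remains to glue the sides of a separation along `{x, y}`. Suppose that on each side `x` or `y` has
at most `k - 2` neighbours. Then both sides stay `(k - 1)`-degenerate with the edge `xy` added, so
all colourings with different colours at `x` and `y` are equivalent. Every colouring is equivalent
to one of these: otherwise, both sides contain a Kempe chain through `x` that avoids `y`, and after
a renaming of colours on one side the two can be swapped together. If `x` and `y` both have at least
`k - 1` neighbours on one side, then replacing `x` by its neighbour on the other side, if any, gives
a separation of the first kind; this is where `4 ≤ k` enters.
-/

section KempeClasses

variable {k d : ℕ} {G H : SimpleGraph V} {c c' e : V → Fin k} {a b : Fin k}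
  {A B K S : Set V} {u v x y : V}

/-- The colouring obtained from `c` by swapping the colours `a` and `b` on `K`. -/
noncomputable def swapOn (c : V → Fin k) (a b : Fin k) (K : Set V) : V → Fin k :=
  K.piecewise (Equiv.swap a b ∘ c) c

/-- Closure of `K` under passing to neighbours inside the colour classes `a` and `b`: the vertices
of `K` coloured `a` or `b` form a union of Kempe chains. Vertices of `K` with other colours are
unconstrained, since `swapOn` leaves them alone. -/
def IsChainUnion (G : SimpleGraph V) (c : V → Fin k) (a b : Fin k) (K : Set V) : Prop :=
  ∀ ⦃u v⦄, G.Adj u v → u ∈ K → (c u = a ∨ c u = b) → (c v = a ∨ c v = b) → v ∈ K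

/-- The Kempe chain in the colours `a` and `b` that contains `v₀`. -/
def kempeChain (G : SimpleGraph V) (c : V → Fin k) (a b : Fin k) (v₀ : {x | c x = a ∨ c x = b}) :
    Set V :=
  Subtype.val '' ((G.induce {x | c x = a ∨ c x = b}).connectedComponentMk v₀).supp

theorem swapOn_of_mem (hv : v ∈ K) : swapOn c a b K v = Equiv.swap a b (c v) :=
  K.piecewise_eq_of_mem _ _ hv

theorem swapOn_of_notMem (hv : v ∉ K) : swapOn c a b K v = c v :=
  K.piecewise_eq_of_notMem _ _ hv

theorem swapOn_of_ne (ha : c v ≠ a) (hb : c v ≠ b) : swapOn c a b K v = c v := by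
  by_cases hv : v ∈ K
  · rw [swapOn_of_mem hv, Equiv.swap_apply_of_ne_of_ne ha hb]
  · exact swapOn_of_notMem hv

theorem swapOn_self : swapOn c a a K = c := by
  simp [swapOn]

theorem swapOn_eq_or_eq_iff :
    (swapOn c a b K v = a ∨ swapOn c a b K v = b) ↔ (c v = a ∨ c v = b) := by
  by_cases hv : v ∈ K
  · grind [swapOn_of_mem hv]
  · rw [swapOn_of_notMem hv]

theorem swapOn_swapOn : swapOn (swapOn c a b K) a b K = c := by
  funext v
  by_cases hv : v ∈ K
  · rw [swapOn_of_mem hv, swapOn_of_mem hv, Equiv.swap_apply_self]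
  · rw [swapOn_of_notMem hv, swapOn_of_notMem hv]

theorem swapOn_swapOn_diff (hAK : A ⊆ K) :
    swapOn (swapOn c a b A) a b (K \ A) = swapOn c a b K := by
  funext v
  by_cases hA : v ∈ A
  · simp [swapOn, hA, hAK hA]
  · simp [swapOn, hA, Set.piecewise]

theorem eqOn_swapOn (h : Set.EqOn c c' S) : Set.EqOn (swapOn c a b K) (swapOn c' a b K) S := by
  intro v hv
  simp [swapOn, Set.piecewise, h hv]

theorem IsChainUnion.isProperColoring_swapOn (hK : IsChainUnion G c a b K)
    (hc : IsProperColoring G k c) : IsProperColoring G k (swapOn c a b K) := by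
  have boundary {u v : V} (huv : G.Adj u v) (hu : u ∈ K) (hv : v ∉ K) :
      Equiv.swap a b (c u) ≠ c v := by
    by_cases hcu : c u = a ∨ c u = b
    · have hcv : ¬ (c v = a ∨ c v = b) := fun hcv => hv (hK huv hu hcu hcv)
      grind
    · rw [not_or] at hcu
      rw [Equiv.swap_apply_of_ne_of_ne hcu.1 hcu.2]
      exact hc huv
  intro u v huv
  by_cases hu : u ∈ K <;> by_cases hv : v ∈ K
  · rw [swapOn_of_mem hu, swapOn_of_mem hv]
    exact (Equiv.swap a b).injective.ne (hc huv)
  · simpa only [swapOn_of_mem hu, swapOn_of_notMem hv] using boundary huv hu hv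
  · simpa only [swapOn_of_notMem hu, swapOn_of_mem hv] using (boundary huv.symm hv hu).symm
  · simpa only [swapOn_of_notMem hu, swapOn_of_notMem hv] using hc huv

theorem isChainUnion_swapOn_iff :
    IsChainUnion G (swapOn c a b A) a b K ↔ IsChainUnion G c a b K := by
  simp only [IsChainUnion, swapOn_eq_or_eq_iff]

theorem IsChainUnion.mono (hGH : G ≤ H) (hK : IsChainUnion H c a b K) : IsChainUnion G c a b K :=
  fun _ _ huv => hK (hGH huv)

theorem IsChainUnion.color_comm (hK : IsChainUnion G c a b K) : IsChainUnion G c b a K :=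
  fun _ _ huv hu hcu hcv => hK huv hu hcu.symm hcv.symm

theorem IsChainUnion.compl (hK : IsChainUnion G c a b K) : IsChainUnion G c a b Kᶜ :=
  fun _ _ huv hu hcu hcv hv => hu (hK huv.symm hv hcv hcu)

theorem IsChainUnion.diff (hK : IsChainUnion G c a b K) (hA : IsChainUnion G c a b A) :
    IsChainUnion G c a b (K \ A) :=
  fun _ _ huv hu hcu hcv => ⟨hK huv hu.1 hcu hcv, hA.compl huv hu.2 hcu hcv⟩

theorem mem_kempeChain_iff {v₀ : {x | c x = a ∨ c x = b}} : v ∈ kempeChain G c a b v₀ ↔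
    ∃ hv : c v = a ∨ c v = b,
      (G.induce {x | c x = a ∨ c x = b}).Reachable v₀ ⟨v, hv⟩ := by
  simp [kempeChain, reachable_comm]

theorem isChainUnion_kempeChain (v₀ : {x | c x = a ∨ c x = b}) :
    IsChainUnion G c a b (kempeChain G c a b v₀) := by
  intro u v huv hu _ hcv
  obtain ⟨_, hreach⟩ := mem_kempeChain_iff.1 hu
  exact mem_kempeChain_iff.2 ⟨hcv, hreach.trans (Adj.reachable huv)⟩

theorem IsChainUnion.kempeChain_subset {v₀ : {x | c x = a ∨ c x = b}} (hK : IsChainUnion G c a b K)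
    (hv₀ : v₀.1 ∈ K) : kempeChain G c a b v₀ ⊆ K := by
  intro v hv
  obtain ⟨hcv, ⟨p⟩⟩ := mem_kempeChain_iff.1 hv
  by_contra hvK
  obtain ⟨e, -, hfst, hsnd⟩ := p.exists_boundary_dart (Subtype.val ⁻¹' K) hv₀ hvK
  exact hsnd (hK e.adj hfst e.fst.2 e.snd.2)

theorem kempeStep_iff :
    KempeStep G k c c' ↔ ∃ a b v₀, c' = swapOn c a b (kempeChain G c a b v₀) := by
  have apply_eq (a b : Fin k) (v₀ : {x | c x = a ∨ c x = b}) (v : V) :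
      swapOn c a b (kempeChain G c a b v₀) v = if h : c v = a ∨ c v = b then
        if (G.induce {x : V | c x = a ∨ c x = b}).Reachable v₀ ⟨v, h⟩
          then Equiv.swap a b (c v) else c v
      else c v := by
    simp only [swapOn, Set.piecewise, mem_kempeChain_iff, Function.comp_apply]
    split_ifs <;> grind
  simp only [KempeStep, funext_iff, apply_eq]

theorem KempeStep.exists_isChainUnion (h : KempeStep G k c c') :
    ∃ a b K, IsChainUnion G c a b K ∧ c' = swapOn c a b K := by
  obtain ⟨a, b, v₀, rfl⟩ := kempeStep_iff.1 h
  exact ⟨a, b, _, isChainUnion_kempeChain v₀, rfl⟩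

theorem KempeEquiv.trans (h : KempeEquiv G k c c') (h' : KempeEquiv G k c' e) :
    KempeEquiv G k c e :=
  Relation.ReflTransGen.trans h h'

theorem KempeEquiv.isProperColoring (h : KempeEquiv G k c c') (hc : IsProperColoring G k c) :
    IsProperColoring G k c' := by
  induction h with
  | refl => exact hc
  | tail _ hstep ih =>
    obtain ⟨a, b, K, hK, rfl⟩ := hstep.exists_isChainUnion
    exact hK.isProperColoring_swapOn ih

theorem IsProperColoring.mono (hGH : G ≤ H) (hc : IsProperColoring H k c) :
    IsProperColoring G k c :=
  fun _ _ huv => hc (hGH huv)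

section Finite

variable [Finite V]

theorem IsChainUnion.kempeEquiv (hK : IsChainUnion G c a b K) :
    KempeEquiv G k c (swapOn c a b K) := by
  induction hn : K.ncard using Nat.strong_induction_on generalizing c K with
  | _ n ih =>
  by_cases hex : ∃ v ∈ K, c v = a ∨ c v = b
  · obtain ⟨v, hv, hcv⟩ := hex
    set C := kempeChain G c a b ⟨v, hcv⟩
    have hvC : v ∈ C := mem_kempeChain_iff.2 ⟨hcv, Reachable.refl _⟩
    have hCK : C ⊆ K := hK.kempeChain_subset hv
    have hlt : (K \ C).ncard < n :=
      hn ▸ Set.ncard_lt_ncard ⟨Set.sdiff_subset, fun h => (h hv).2 hvC⟩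
    have hrest : IsChainUnion G (swapOn c a b C) a b (K \ C) :=
      isChainUnion_swapOn_iff.2 (hK.diff (isChainUnion_kempeChain _))
    rw [← swapOn_swapOn_diff hCK]
    exact .head (kempeStep_iff.2 ⟨a, b, _, rfl⟩) (ih _ hlt hrest rfl)
  · have : swapOn c a b K = c := by
      funext v
      by_cases hv : v ∈ K
      · exact swapOn_of_ne (fun h => hex ⟨v, hv, .inl h⟩) (fun h => hex ⟨v, hv, .inr h⟩)
      · exact swapOn_of_notMem hv
    rw [this]
    exact .refl

theorem KempeEquiv.symm (h : KempeEquiv G k c c') : KempeEquiv G k c' c := by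
  induction h with
  | refl => exact .refl
  | tail _ hstep ih =>
    obtain ⟨a, b, K, hK, rfl⟩ := hstep.exists_isChainUnion
    have hback := (isChainUnion_swapOn_iff (A := K).2 hK).kempeEquiv
    rw [swapOn_swapOn] at hback
    exact hback.trans ih

theorem KempeEquiv.mono (hGH : G ≤ H) (h : KempeEquiv H k c c') : KempeEquiv G k c c' := by
  induction h with
  | refl => exact .refl
  | tail _ hstep ih =>
    obtain ⟨a, b, K, hK, rfl⟩ := hstep.exists_isChainUnion
    exact ih.trans (hK.mono hGH).kempeEquiv

theorem kempeEquiv_update {f : Fin k} (hc : IsProperColoring G k c)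
    (hf : ∀ u, G.Adj v u → c u ≠ f) : KempeEquiv G k c (Function.update c v f) := by
  have hchain : IsChainUnion G c (c v) f {v} := by
    rintro u w huw rfl - (hw | hw)
    · exact absurd hw (hc huw).symm
    · exact absurd hw (hf w huw)
  have hswap : swapOn c (c v) f {v} = Function.update c v f := by
    funext w
    by_cases hw : w = v
    · subst hw
      simp [swapOn]
    · simp [swapOn, hw]
  exact hswap ▸ hchain.kempeEquiv

theorem kempeEquiv_piecewise_perm (π : Equiv.Perm (Fin k))
    (hA : ∀ u v, G.Adj u v → u ∈ A → v ∉ A → π (c v) = c v) :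
    KempeEquiv G k c (A.piecewise (π ∘ c) c) := by
  induction hn : π.support.card using Nat.strong_induction_on generalizing π with
  | _ n ih =>
  by_cases hπ : π = 1
  · have : A.piecewise (π ∘ c) c = c := by simp [hπ]
    rw [this]
    exact .refl
  obtain ⟨a, ha⟩ : ∃ a, π a ≠ a := by
    by_contra! h
    exact hπ (Equiv.ext h)
  set σ := Equiv.swap a (π a) * π with hσ
  have hσ_fixed : ∀ i, π i = i → σ i = i := by
    intro i hi
    by_contra hσi
    exact Equiv.Perm.mem_support.1 (Equiv.Perm.mem_support_swap_mul_imp_mem_support_ne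
      (Equiv.Perm.mem_support.2 hσi)).1 hi
  have hcσ := ih _ (hn ▸ Equiv.Perm.card_support_swap_mul ha) σ
    (fun u v huv hu hv => hσ_fixed _ (hA u v huv hu hv)) rfl
  have hchain : IsChainUnion G (A.piecewise (σ ∘ c) c) a (π a) A := by
    intro u v huv hu _ hcv
    by_contra hv
    have hfix := hA u v huv hu hv
    rw [A.piecewise_eq_of_notMem _ _ hv] at hcv
    rcases hcv with hcv | hcv
    · exact ha (hcv ▸ hfix)
    · exact ha (π.injective (hcv ▸ hfix))
  have hswap : swapOn (A.piecewise (σ ∘ c) c) a (π a) A = A.piecewise (π ∘ c) c := by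
    funext v
    by_cases hv : v ∈ A
    · simp [swapOn, hv, hσ]
    · simp [swapOn, hv]
  exact hcσ.trans (hswap ▸ hchain.kempeEquiv)

end Finite

/-- The subgraph of `G` induced on `W`, kept as a graph on all of `V` in which the vertices outside
`W` are isolated, so that colourings need not be restricted to subtypes. -/
abbrev spanningInduce (G : SimpleGraph V) (W : Set V) : SimpleGraph V :=
  (G.induce W).spanningCoe

theorem spanningInduce_adj :
    (spanningInduce G A).Adj u v ↔ G.Adj u v ∧ u ∈ A ∧ v ∈ A := by
  simp [spanningInduce]

theorem spanningInduce_spanningInduce :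
    spanningInduce (spanningInduce G A) B = spanningInduce G (A ∩ B) := by
  ext u v
  simp only [spanningInduce_adj, Set.mem_inter_iff]
  tauto

theorem spanningInduce_sup_edge (hx : x ∈ A) (hy : y ∈ A) :
    spanningInduce (G ⊔ edge x y) A = spanningInduce G A ⊔ edge x y := by
  ext u v
  simp only [spanningInduce_adj, sup_adj, edge_adj]
  grind

theorem neighborSet_spanningInduce_of_mem (hv : v ∈ A) :
    (spanningInduce G A).neighborSet v = A ∩ G.neighborSet v := by
  ext u
  simp [hv, and_comm]

theorem neighborSet_spanningInduce_subset :
    (spanningInduce G A).neighborSet v ⊆ A ∩ G.neighborSet v := by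
  intro u hu
  obtain ⟨huv, -, huA⟩ := spanningInduce_adj.1 hu
  exact ⟨huA, huv⟩

theorem isChainUnion_spanningInduce_iff_of_eqOn_perm (π : Equiv.Perm (Fin k))
    (h : Set.EqOn c' (π ∘ c) A) : IsChainUnion (spanningInduce G A) c' (π a) (π b) K ↔
      IsChainUnion (spanningInduce G A) c a b K := by
  have color_iff {v : V} (hv : v ∈ A) : (c' v = π a ∨ c' v = π b) ↔ (c v = a ∨ c v = b) := by
    simp [h hv]
  refine forall₂_congr fun u v => forall₂_congr fun huv _ => ?_
  obtain ⟨-, hu, hv⟩ := spanningInduce_adj.1 huv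
  rw [color_iff hu, color_iff hv]

theorem isChainUnion_spanningInduce_congr (h : Set.EqOn c c' A) :
    IsChainUnion (spanningInduce G A) c a b K ↔ IsChainUnion (spanningInduce G A) c' a b K :=
  isChainUnion_spanningInduce_iff_of_eqOn_perm 1 h

theorem isChainUnion_diff_singleton (hK : IsChainUnion (spanningInduce G {v}ᶜ) c a b K)
    (hv : (c v = a ∨ c v = b) → ∀ u, G.Adj v u → (c u = a ∨ c u = b) → u ∉ K) :
    IsChainUnion G c a b (K \ {v}) := by
  rintro u w huw ⟨huK, huv⟩ hcu hcw
  have hwv : w ≠ v := by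
    rintro rfl
    exact hv hcw u huw.symm hcu huK
  exact ⟨hK (spanningInduce_adj.2 ⟨huw, huv, hwv⟩) huK hcu hcw, hwv⟩

theorem isChainUnion_insert (hK : IsChainUnion (spanningInduce G {v}ᶜ) c a b K)
    (hv : ∀ u, G.Adj v u → (c u = a ∨ c u = b) → u ∈ K) : IsChainUnion G c a b (insert v K) := by
  intro u w huw hu hcu hcw
  by_cases hwv : w = v
  · exact .inl hwv
  by_cases huv : u = v
  · exact .inr (hv w (huv ▸ huw) hcw)
  · exact .inr (hK (spanningInduce_adj.2 ⟨huw, huv, hwv⟩) (hu.resolve_left huv) hcu hcw)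

section Finite

variable [Finite V]

theorem exists_forall_mem_ne_of_ncard_lt {N : Set V} (hN : N.ncard < k) (c : V → Fin k) :
    ∃ f, ∀ u ∈ N, c u ≠ f := by
  have hlt : (c '' N).ncard < (Set.univ : Set (Fin k)).ncard := by
    simpa using (Set.ncard_image_le N.toFinite).trans_lt hN
  obtain ⟨f, -, hf⟩ := Set.exists_mem_notMem_of_ncard_lt_ncard hlt
  exact ⟨f, fun u hu huf => hf ⟨u, hu, huf⟩⟩

theorem subsingleton_of_forall_exists_color {N : Set V} (hN : N.ncard < k) (hab : a ≠ b)
    (hall : ∀ f, f ≠ a → f ≠ b → ∃ u ∈ N, c u = f) :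
    {u ∈ N | c u = a ∨ c u = b}.Subsingleton := by
  rintro u ⟨hu, hcu⟩ w ⟨hw, hcw⟩
  by_contra huw
  have hsub : ({a, b}ᶜ : Set (Fin k)) ⊆ c '' (N \ {u, w}) := by
    intro f hf
    simp only [Set.mem_compl_iff, Set.mem_insert_iff, Set.mem_singleton_iff, not_or] at hf
    obtain ⟨t, ht, rfl⟩ := hall f hf.1 hf.2
    refine ⟨t, ⟨ht, ?_⟩, rfl⟩
    rintro (rfl | rfl)
    · exact hcu.elim hf.1 hf.2
    · exact hcw.elim hf.1 hf.2
  have hle : ({a, b}ᶜ : Set (Fin k)).ncard ≤ (N \ {u, w}).ncard :=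
    (Set.ncard_le_ncard hsub).trans (Set.ncard_image_le (Set.toFinite _))
  have hpair : ({u, w} : Set V) ⊆ N := Set.pair_subset hu hw
  have htwo := Set.ncard_le_ncard hpair
  rw [Set.ncard_compl, Set.ncard_pair hab, Nat.card_fin, Set.ncard_sdiff hpair,
    Set.ncard_pair huw] at hle
  rw [Set.ncard_pair huw] at htwo
  omega

theorem exists_kempeEquiv_eqOn_swapOn_of_ncard_neighborSet_lt
    (hdeg : (G.neighborSet v).ncard < k) (hc : IsProperColoring G k c)
    (hK : IsChainUnion (spanningInduce G {v}ᶜ) c a b K) :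
    ∃ c', KempeEquiv G k c c' ∧ Set.EqOn c' (swapOn c a b K) {v}ᶜ := by
  rcases eq_or_ne a b with rfl | hab
  · exact ⟨c, .refl, fun u _ => by rw [swapOn_self]⟩
  by_cases hfree : ∃ f, f ≠ a ∧ f ≠ b ∧ ∀ u, G.Adj v u → c u ≠ f
  · obtain ⟨f, hfa, hfb, hf⟩ := hfree
    have hupd : Set.EqOn c (Function.update c v f) {v}ᶜ := fun u hu => by
      rw [Function.update_of_ne hu]
    have hchain : IsChainUnion G (Function.update c v f) a b (K \ {v}) :=
      isChainUnion_diff_singleton ((isChainUnion_spanningInduce_congr hupd).1 hK)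
        (by simp [hfa, hfb])
    refine ⟨_, (kempeEquiv_update hc hf).trans hchain.kempeEquiv, fun u hu => ?_⟩
    rw [eqOn_swapOn hupd hu]
    simp [swapOn, Set.piecewise, Set.mem_compl_singleton_iff.1 hu]
  -- Since the colours other than `a` and `b` all occur around `v`, at most one neighbour of `v` is
  -- coloured `a` or `b`, so no two chains of `G - v` merge at `v`.
  · have huniq : {u ∈ G.neighborSet v | c u = a ∨ c u = b}.Subsingleton :=
      subsingleton_of_forall_exists_color hdeg hab (by push Not at hfree; exact hfree)
    by_cases hin : ∃ u, G.Adj v u ∧ (c u = a ∨ c u = b) ∧ u ∈ K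
    · obtain ⟨u₀, hvu₀, hcu₀, hu₀K⟩ := hin
      have hchain := isChainUnion_insert hK
        (fun u hvu hcu => huniq ⟨hvu₀, hcu₀⟩ ⟨hvu, hcu⟩ ▸ hu₀K)
      refine ⟨_, hchain.kempeEquiv, fun u hu => ?_⟩
      simp [swapOn, Set.piecewise, Set.mem_compl_singleton_iff.1 hu]
    · push Not at hin
      refine ⟨_, (isChainUnion_diff_singleton hK (fun _ => hin)).kempeEquiv, fun u hu => ?_⟩
      simp [swapOn, Set.piecewise, Set.mem_compl_singleton_iff.1 hu]

theorem KempeEquiv.exists_eqOn_of_ncard_neighborSet_lt (hdeg : (G.neighborSet v).ncard < k)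
    (hc : IsProperColoring G k c) (h : KempeEquiv (spanningInduce G {v}ᶜ) k c e) :
    ∃ c', KempeEquiv G k c c' ∧ Set.EqOn c' e {v}ᶜ := by
  induction h with
  | refl => exact ⟨c, .refl, Set.eqOn_refl c _⟩
  | tail _ hstep ih =>
    obtain ⟨c₁, hcc₁, hc₁⟩ := ih
    obtain ⟨a, b, K, hK, rfl⟩ := hstep.exists_isChainUnion
    obtain ⟨c₂, hc₁c₂, hc₂⟩ := exists_kempeEquiv_eqOn_swapOn_of_ncard_neighborSet_lt hdeg
      (hcc₁.isProperColoring hc) ((isChainUnion_spanningInduce_congr hc₁).2 hK)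
    exact ⟨c₂, hcc₁.trans hc₁c₂, hc₂.trans (eqOn_swapOn hc₁)⟩

theorem Degenerate.mono (hGH : G ≤ H) (hH : Degenerate H d) : Degenerate G d := by
  intro S hS
  obtain ⟨v, hv, hcard⟩ := hH S hS
  refine ⟨v, hv, (Set.ncard_le_ncard ?_).trans hcard⟩
  exact Set.inter_subset_inter_right S fun _ hu => hGH hu

theorem Degenerate.set_induction (hG : Degenerate G d) {P : Set V → Prop} (empty : P ∅)
    (step : ∀ W, ∀ v ∈ W, ((spanningInduce G W).neighborSet v).ncard ≤ d → P (W \ {v}) → P W)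
    (W : Set V) : P W := by
  induction hn : W.ncard using Nat.strong_induction_on generalizing W with
  | _ n ih =>
  rcases W.eq_empty_or_nonempty with rfl | hne
  · exact empty
  · obtain ⟨v, hv, hdeg⟩ := hG W hne
    refine step W v hv (neighborSet_spanningInduce_of_mem hv ▸ hdeg) (ih _ ?_ _ rfl)
    exact hn ▸ Set.ncard_sdiff_singleton_lt_of_mem hv

theorem Degenerate.exists_isProperColoring (hG : Degenerate G d) (hdk : d < k) :
    ∃ f : V → Fin k, IsProperColoring G k f := by
  suffices ∀ W, ∃ f, IsProperColoring (spanningInduce G W) k f by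
    simpa only [spanningCoe_induce_univ] using this Set.univ
  refine hG.set_induction ⟨fun _ => ⟨0, by omega⟩, fun u v huv => ?_⟩ ?_
  · exact absurd (spanningInduce_adj.1 huv).2.1 (Set.notMem_empty u)
  · rintro W v - hdeg ⟨f, hf⟩
    obtain ⟨i, hi⟩ := exists_forall_mem_ne_of_ncard_lt (hdeg.trans_lt hdk) f
    refine ⟨Function.update f v i, fun s t hst => ?_⟩
    have hf' (hs : s ≠ v) (ht : t ≠ v) : f s ≠ f t := by
      obtain ⟨hadj, hsW, htW⟩ := spanningInduce_adj.1 hst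
      exact hf (spanningInduce_adj.2 ⟨hadj, ⟨hsW, hs⟩, htW, ht⟩)
    have hs' (hs : s = v) : f t ≠ i := hi t (hs ▸ hst)
    have ht' (ht : t = v) : f s ≠ i := hi s (ht ▸ hst.symm)
    have hne := hst.ne
    simp only [Function.update_apply]
    grind

theorem Degenerate.kempeClass (hG : Degenerate G d) (hdk : d < k) : KempeClass G k := by
  suffices ∀ W c c', IsProperColoring (spanningInduce G W) k c →
      IsProperColoring (spanningInduce G W) k c' →
      ∃ e, KempeEquiv (spanningInduce G W) k c e ∧ Set.EqOn e c' W by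
    intro c c' hc hc'
    rw [← spanningCoe_induce_univ (G := G)] at hc hc' ⊢
    obtain ⟨e, hce, hec'⟩ := this Set.univ c c' hc hc'
    rwa [(Set.eqOn_univ _ _).1 hec'] at hce
  refine hG.set_induction (fun c _ _ _ => ⟨c, .refl, Set.eqOn_empty _ _⟩) ?_
  intro W v hv hdeg ih c c' hc hc'
  have hW : spanningInduce (spanningInduce G W) {v}ᶜ = spanningInduce G (W \ {v}) :=
    spanningInduce_spanningInduce
  have hle : spanningInduce G (W \ {v}) ≤ spanningInduce G W := hW ▸ spanningCoe_induce_le _ _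
  obtain ⟨e, hce, hec'⟩ := ih c c' (hc.mono hle) (hc'.mono hle)
  obtain ⟨c₁, hcc₁, hc₁e⟩ := KempeEquiv.exists_eqOn_of_ncard_neighborSet_lt
    (hdeg.trans_lt hdk) hc (hW ▸ hce)
  have hc₁ : Set.EqOn c₁ c' (W \ {v}) := fun u hu => (hc₁e hu.2).trans (hec' hu)
  refine ⟨Function.update c₁ v (c' v),
    hcc₁.trans (kempeEquiv_update (hcc₁.isProperColoring hc) ?_), ?_⟩
  · intro u hvu
    rw [hc₁ ⟨(spanningInduce_adj.1 hvu).2.2, hvu.ne'⟩]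
    exact (hc' hvu).symm
  · intro u hu
    by_cases huv : u = v
    · subst huv
      simp
    · rw [Function.update_of_ne huv, hc₁ ⟨hu, huv⟩]

end Finite

/-- `A` and `B` are the two sides of a separation of `G`: they cover the vertices, and no edge joins
`A \ B` to `B \ A`. -/
structure IsSeparation (G : SimpleGraph V) (A B : Set V) : Prop where
  mem_or_mem : ∀ v, v ∈ A ∨ v ∈ B
  mem_and_mem : ∀ ⦃u v⦄, G.Adj u v → (u ∈ A ∧ v ∈ A) ∨ (u ∈ B ∧ v ∈ B)

/-- The colourings `c` and `c'` agree on `S` after renaming the colours of `c`. -/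
def EqUpToPermOn (S : Set V) (c c' : V → Fin k) : Prop :=
  ∃ π : Equiv.Perm (Fin k), Set.EqOn c' (π ∘ c) S

/-- The vertices of `S` coloured `a` or `b` lie all inside `K` or all outside `K`. -/
def IsUniformOn (c : V → Fin k) (a b : Fin k) (K S : Set V) : Prop :=
  (∀ v ∈ S, (c v = a ∨ c v = b) → v ∈ K) ∨ (∀ v ∈ S, (c v = a ∨ c v = b) → v ∉ K)

/-- The Kempe chain of `G` through `x` in the colours `c x` and `b ≠ c x` does not contain `y`. It
is expressed by a separating union of chains because these are easier to glue than chains. -/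
def ChainAvoids (G : SimpleGraph V) (c : V → Fin k) (x y : V) (b : Fin k) : Prop :=
  b ≠ c x ∧ ∃ K, IsChainUnion G c (c x) b K ∧ x ∈ K ∧ y ∉ K

theorem IsProperColoring.sup_edge (hc : IsProperColoring G k c) (hxy : c x ≠ c y) :
    IsProperColoring (G ⊔ edge x y) k c := by
  rintro u v (huv | huv)
  · exact hc huv
  · obtain ⟨⟨rfl, rfl⟩ | ⟨rfl, rfl⟩, -⟩ := (edge_adj ..).1 huv
    exacts [hxy, hxy.symm]

theorem EqUpToPermOn.refl (S : Set V) (c : V → Fin k) : EqUpToPermOn S c c :=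
  ⟨1, fun _ _ => rfl⟩

theorem EqUpToPermOn.trans (h : EqUpToPermOn S c c') (h' : EqUpToPermOn S c' e) :
    EqUpToPermOn S c e := by
  obtain ⟨π, hπ⟩ := h
  obtain ⟨σ, hσ⟩ := h'
  exact ⟨σ * π, fun v hv => by simp [hσ hv, hπ hv]⟩

theorem chainAvoids_spanningInduce_perm (π : Equiv.Perm (Fin k)) (h : Set.EqOn c' (π ∘ c) A)
    (hx : x ∈ A) (hb : ChainAvoids (spanningInduce G A) c x y b) :
    ChainAvoids (spanningInduce G A) c' x y (π b) := by
  obtain ⟨hne, K, hK, hxK, hyK⟩ := hb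
  have hcx : c' x = π (c x) := h hx
  refine ⟨fun hb => hne (π.injective (hb.trans hcx)), K, ?_, hxK, hyK⟩
  rw [hcx]
  exact (isChainUnion_spanningInduce_iff_of_eqOn_perm π h).2 hK

theorem IsChainUnion.exists_chainAvoids (hK : IsChainUnion G c a b K) (hab : a ≠ b)
    (hcx : c x = a ∨ c x = b) (hx : x ∈ K) (hy : y ∉ K) : ∃ f, ChainAvoids G c x y f := by
  rcases hcx with rfl | rfl
  · exact ⟨b, hab.symm, K, hK, hx, hy⟩
  · exact ⟨a, hab, K, hK.color_comm, hx, hy⟩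

theorem IsChainUnion.isUniformOn_of_isClique (hK : IsChainUnion G c a b K) (hS : G.IsClique S) :
    IsUniformOn c a b K S := by
  by_contra h
  simp only [IsUniformOn, not_or, not_forall, not_not] at h
  obtain ⟨⟨u, hu, hcu, huK⟩, v, hv, hcv, hvK⟩ := h
  have huv : v ≠ u := by rintro rfl; exact huK hvK
  exact huK (hK (hS hv hu huv) hvK hcv hcu)

theorem IsChainUnion.isUniformOn_pair (hK : IsChainUnion G c a b K) (hab : a ≠ b)
    (hxy : c x = c y) (havoid : ∀ f, ¬ ChainAvoids G c x y f) : IsUniformOn c a b K {x, y} := by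
  by_cases hcx : c x = a ∨ c x = b
  · have hmem : x ∈ K ↔ y ∈ K := by
      by_contra h
      obtain ⟨hx, hy⟩ | ⟨hx, hy⟩ : (x ∈ K ∧ y ∉ K) ∨ (x ∉ K ∧ y ∈ K) := by tauto
      · exact absurd (hK.exists_chainAvoids hab hcx hx hy) (not_exists.2 havoid)
      · exact absurd (hK.compl.exists_chainAvoids hab hcx hx (not_not.2 hy)) (not_exists.2 havoid)
    by_cases hx : x ∈ K
    · left; rintro v (rfl | rfl) -; exacts [hx, hmem.1 hx]
    · right; rintro v (rfl | rfl) -; exacts [hx, fun hy => hx (hmem.2 hy)]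
  · left
    rintro v (rfl | rfl) hcv
    exacts [absurd hcv hcx, absurd hcv (hxy ▸ hcx)]

namespace IsSeparation

theorem symm (hAB : IsSeparation G A B) : IsSeparation G B A :=
  ⟨fun v => (hAB.mem_or_mem v).symm, fun _ _ huv => (hAB.mem_and_mem huv).symm⟩

theorem sup_edge (hAB : IsSeparation G A B) (hx : x ∈ A) (hy : y ∈ A) :
    IsSeparation (G ⊔ edge x y) A B := by
  refine ⟨hAB.mem_or_mem, fun u v huv => ?_⟩
  rcases huv with huv | huv
  · exact hAB.mem_and_mem huv
  · obtain ⟨⟨rfl, rfl⟩ | ⟨rfl, rfl⟩, -⟩ := (edge_adj ..).1 huv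
    exacts [.inl ⟨hx, hy⟩, .inl ⟨hy, hx⟩]

theorem neighborSet_subset_left (hAB : IsSeparation G A B) (hv : v ∉ B) :
    G.neighborSet v ⊆ A :=
  fun _ huv => ((hAB.mem_and_mem huv).resolve_right fun h => hv h.1).2

theorem insert_diff_singleton (hAB : IsSeparation G A B) (hx : x ∈ A)
    (huniq : ∀ w, G.Adj x w → w ∉ A → w = u) : IsSeparation G (insert u A) (B \ {x}) := by
  have mem_and_mem {w : V} (hxw : G.Adj x w) : x ∈ insert u A ∧ w ∈ insert u A :=
    ⟨.inr hx, by_cases Or.inr fun hw => .inl (huniq w hxw hw)⟩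
  refine ⟨fun w => ?_, fun s t hst => ?_⟩
  · by_cases hw : w = x
    · exact .inl (.inr (hw ▸ hx))
    · exact (hAB.mem_or_mem w).imp Or.inr fun hwB => ⟨hwB, hw⟩
  · by_cases hs : s = x
    · subst hs
      exact .inl (mem_and_mem hst)
    by_cases ht : t = x
    · subst ht
      exact .inl (mem_and_mem hst.symm).symm
    exact (hAB.mem_and_mem hst).imp (And.imp Or.inr Or.inr) fun h => ⟨⟨h.1, hs⟩, h.2, ht⟩

theorem exists_ncard_inter_eq (hAB : IsSeparation G A B) {n : ℕ} (hS : (A ∩ B).ncard ≤ n)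
    (hA : n < A.ncard) : ∃ B', IsSeparation G A B' ∧ (A ∩ B').ncard = n ∧ B' ≠ Set.univ := by
  obtain ⟨T, hST, hTA, hT⟩ := Set.exists_subsuperset_card_eq Set.inter_subset_left hS hA.le
  have hAT : A ∩ (B ∪ T) = T := by grind
  refine ⟨B ∪ T, ⟨fun v => (hAB.mem_or_mem v).imp_right Or.inl, fun u v huv =>
    (hAB.mem_and_mem huv).imp_right (And.imp Or.inl Or.inl)⟩, hAT.symm ▸ hT, fun huniv => ?_⟩
  rw [huniv, Set.inter_univ] at hAT
  exact hA.ne (hAT ▸ hT.symm)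

theorem isChainUnion_of_forall_mem (hAB : IsSeparation G A B)
    (hK : IsChainUnion (spanningInduce G A) c a b K)
    (hin : ∀ v ∈ A ∩ B, (c v = a ∨ c v = b) → v ∈ K) :
    IsChainUnion G c a b {v | v ∈ A → v ∈ K} := by
  intro u v huv hu hcu hcv hv
  rcases hAB.mem_and_mem huv with ⟨huA, hvA⟩ | ⟨-, hvB⟩
  · exact hK (spanningInduce_adj.2 ⟨huv, huA, hvA⟩) (hu huA) hcu hcv
  · exact hin v ⟨hv, hvB⟩ hcv

theorem isChainUnion_of_forall_notMem (hAB : IsSeparation G A B)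
    (hK : IsChainUnion (spanningInduce G A) c a b K)
    (hout : ∀ v ∈ A ∩ B, (c v = a ∨ c v = b) → v ∉ K) : IsChainUnion G c a b (A ∩ K) := by
  rintro u v huv ⟨huA, huK⟩ hcu hcv
  rcases hAB.mem_and_mem huv with ⟨-, hvA⟩ | ⟨huB, -⟩
  · exact ⟨hvA, hK (spanningInduce_adj.2 ⟨huv, huA, hvA⟩) huK hcu hcv⟩
  · exact absurd huK (hout u ⟨huA, huB⟩ hcu)

theorem chainAvoids (hAB : IsSeparation G A B) (hS : A ∩ B = {x, y})
    (hxy : c x = c y) (hA : ChainAvoids (spanningInduce G A) c x y b)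
    (hB : ChainAvoids (spanningInduce G B) c x y b) : ChainAvoids G c x y b := by
  obtain ⟨hne, K, hK, hxK, hyK⟩ := hA
  obtain ⟨-, L, hL, hxL, hyL⟩ := hB
  have hyA : y ∈ A := (hS.ge (.inr rfl)).1
  have hKL : ∀ v ∈ A, v ∈ B → (v ∈ K ↔ v ∈ L) := by
    intro v hvA hvB
    rcases hS.le ⟨hvA, hvB⟩ with rfl | rfl
    exacts [iff_of_true hxK hxL, iff_of_false hyK hyL]
  refine ⟨hne, {v | (v ∈ A → v ∈ K) ∧ (v ∈ B → v ∈ L)}, ?_, ⟨fun _ => hxK, fun _ => hxL⟩,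
    fun hy => hyK (hy.1 hyA)⟩
  rintro u v huv ⟨huK, huL⟩ hcu hcv
  rcases hAB.mem_and_mem huv with ⟨huA, hvA⟩ | ⟨huB, hvB⟩
  · have hvK : v ∈ K := hK (spanningInduce_adj.2 ⟨huv, huA, hvA⟩) (huK huA) hcu hcv
    exact ⟨fun _ => hvK, fun hvB => (hKL v hvA hvB).1 hvK⟩
  · have hvL : v ∈ L := hL (spanningInduce_adj.2 ⟨huv, huB, hvB⟩) (huL huB) hcu hcv
    exact ⟨fun hvA => (hKL v hvA hvB).2 hvL, fun _ => hvL⟩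

variable [Finite V]

theorem exists_kempeEquiv_eqOn_swapOn (hAB : IsSeparation G A B)
    (hK : IsChainUnion (spanningInduce G A) c a b K) (huni : IsUniformOn c a b K (A ∩ B)) :
    ∃ c', KempeEquiv G k c c' ∧ Set.EqOn c' (swapOn c a b K) A ∧ EqUpToPermOn B c c' := by
  rcases huni with hin | hout
  · refine ⟨_, (hAB.isChainUnion_of_forall_mem hK hin).kempeEquiv, fun v hv => ?_,
      Equiv.swap a b, fun v hv => ?_⟩
    · simp [swapOn, Set.piecewise, hv]
    · by_cases hvK : v ∈ A → v ∈ K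
      · exact swapOn_of_mem hvK
      · have hcv : ¬ (c v = a ∨ c v = b) := fun hcv => hvK fun hvA => hin v ⟨hvA, hv⟩ hcv
        rw [not_or] at hcv
        rw [swapOn_of_ne hcv.1 hcv.2, Function.comp_apply, Equiv.swap_apply_of_ne_of_ne hcv.1 hcv.2]
  · refine ⟨_, (hAB.isChainUnion_of_forall_notMem hK hout).kempeEquiv, fun v hv => ?_,
      1, fun v hv => ?_⟩
    · simp [swapOn, Set.piecewise, hv]
    · by_cases hvK : v ∈ A ∩ K
      · have hcv : ¬ (c v = a ∨ c v = b) := fun hcv => hout v ⟨hvK.1, hv⟩ hcv hvK.2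
        rw [not_or] at hcv
        exact swapOn_of_ne hcv.1 hcv.2
      · exact swapOn_of_notMem hvK

theorem exists_kempeEquiv_eqOn (hAB : IsSeparation G A B)
    (huni : ∀ c₁, KempeEquiv G k c c₁ → EqUpToPermOn B c c₁ → ∀ a b K, a ≠ b →
      IsChainUnion (spanningInduce G A) c₁ a b K → IsUniformOn c₁ a b K (A ∩ B))
    (h : KempeEquiv (spanningInduce G A) k c e) :
    ∃ c', KempeEquiv G k c c' ∧ Set.EqOn c' e A ∧ EqUpToPermOn B c c' := by
  induction h with
  | refl => exact ⟨c, .refl, Set.eqOn_refl c A, .refl B c⟩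
  | tail _ hstep ih =>
    obtain ⟨c₁, hcc₁, hc₁, hB₁⟩ := ih
    obtain ⟨a, b, K, hK, rfl⟩ := hstep.exists_isChainUnion
    rcases eq_or_ne a b with rfl | hab
    · exact ⟨c₁, hcc₁, by rwa [swapOn_self], hB₁⟩
    have hK₁ := (isChainUnion_spanningInduce_congr hc₁).2 hK
    obtain ⟨c₂, hc₁c₂, hc₂, hB₂⟩ :=
      hAB.exists_kempeEquiv_eqOn_swapOn hK₁ (huni c₁ hcc₁ hB₁ a b K hab hK₁)
    exact ⟨c₂, hcc₁.trans hc₁c₂, hc₂.trans (eqOn_swapOn hc₁), hB₁.trans hB₂⟩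

theorem exists_kempeEquiv_perm (hAB : IsSeparation G A B) (π : Equiv.Perm (Fin k))
    (hπ : ∀ v ∈ A ∩ B, π (c v) = c v) :
    ∃ c', KempeEquiv G k c c' ∧ Set.EqOn c' (π ∘ c) A ∧ Set.EqOn c' c B := by
  refine ⟨_, kempeEquiv_piecewise_perm (A := Bᶜ) π fun u v huv hu hv => ?_, fun v hv => ?_,
    fun v hv => if_neg (not_not.2 hv)⟩
  · have hvA : v ∈ A := ((hAB.mem_and_mem huv).resolve_right fun h => hu h.1).2
    exact hπ v ⟨hvA, not_not.1 hv⟩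
  · by_cases hvB : v ∈ B
    · exact (if_neg (not_not.2 hvB)).trans (hπ v ⟨hv, hvB⟩).symm
    · exact if_pos hvB

theorem exists_kempeEquiv_eqOn_of_isClique (hAB : IsSeparation G A B) (hS : G.IsClique (A ∩ B))
    (hA : KempeClass (spanningInduce G A) k) (hc : IsProperColoring G k c)
    (he : IsProperColoring G k e) :
    ∃ c', KempeEquiv G k c c' ∧ Set.EqOn c' e A ∧ EqUpToPermOn B c c' := by
  have hle : spanningInduce G A ≤ G := spanningCoe_induce_le _ _
  refine hAB.exists_kempeEquiv_eqOn (fun c₁ _ _ a b K _ hK => ?_)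
    (hA c e (hc.mono hle) (he.mono hle))
  refine hK.isUniformOn_of_isClique fun u hu v hv huv => ?_
  exact spanningInduce_adj.2 ⟨hS hu hv huv, hu.1, hv.1⟩

theorem kempeClass_of_isClique (hAB : IsSeparation G A B) (hS : G.IsClique (A ∩ B))
    (hA : KempeClass (spanningInduce G A) k) (hB : KempeClass (spanningInduce G B) k) :
    KempeClass G k := by
  intro c e hc he
  obtain ⟨c₁, hcc₁, hc₁, -⟩ := hAB.exists_kempeEquiv_eqOn_of_isClique hS hA hc he
  obtain ⟨c₂, hc₁c₂, hc₂, π, hπ⟩ := hAB.symm.exists_kempeEquiv_eqOn_of_isClique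
    (Set.inter_comm A B ▸ hS) hB (hcc₁.isProperColoring hc) he
  have hc₂A : Set.EqOn c₂ (π ∘ e) A := fun v hv => (hπ hv).trans (congrArg π (hc₁ hv))
  have hπ_fixed : ∀ v ∈ A ∩ B, π⁻¹ (c₂ v) = c₂ v := fun v hv => by
    rw [Equiv.Perm.inv_eq_iff_eq]
    exact (hc₂A hv.1).trans (congrArg π (hc₂ hv.2).symm)
  obtain ⟨c₃, hc₂c₃, hc₃A, hc₃B⟩ := hAB.exists_kempeEquiv_perm π⁻¹ hπ_fixed
  have : c₃ = e := by
    funext v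
    rcases hAB.mem_or_mem v with hv | hv
    · simp [hc₃A hv, hc₂A hv]
    · rw [hc₃B hv, hc₂ hv]
  exact this ▸ (hcc₁.trans hc₁c₂).trans hc₂c₃

theorem exists_chainAvoids (hAB : IsSeparation G A B) (hS : A ∩ B = {x, y})
    (heq : ∀ c', KempeEquiv G k c c' → c' x = c' y)
    (h : KempeEquiv (spanningInduce G A) k c e) (he : e x ≠ e y) :
    ∃ c', KempeEquiv G k c c' ∧ EqUpToPermOn B c c' ∧
      ∃ b, ChainAvoids (spanningInduce G A) c' x y b := by
  by_contra! havoid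
  obtain ⟨c', hcc', hc', -⟩ := hAB.exists_kempeEquiv_eqOn (fun c₁ hcc₁ hB₁ a b K hab hK =>
    hS ▸ hK.isUniformOn_pair hab (heq c₁ hcc₁) (havoid c₁ hcc₁ hB₁)) h
  have hx : x ∈ A := (hS.ge (.inl rfl)).1
  have hy : y ∈ A := (hS.ge (.inr rfl)).1
  exact he (by rw [← hc' hx, ← hc' hy, heq c' hcc'])

end IsSeparation

section Finite

variable [Finite V]

theorem ChainAvoids.exists_kempeEquiv_ne (h : ChainAvoids G c x y b) (hxy : c x = c y) :
    ∃ c', KempeEquiv G k c c' ∧ c' x ≠ c' y := by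
  obtain ⟨hne, K, hK, hx, hy⟩ := h
  refine ⟨_, hK.kempeEquiv, ?_⟩
  rw [swapOn_of_mem hx, swapOn_of_notMem hy, Equiv.swap_apply_left, ← hxy]
  exact hne

theorem IsSeparation.exists_kempeEquiv_ne (hAB : IsSeparation G A B) (hS : A ∩ B = {x, y})
    (hA : ∀ c, IsProperColoring (spanningInduce G A) k c →
      ∃ e, KempeEquiv (spanningInduce G A) k c e ∧ e x ≠ e y)
    (hB : ∀ c, IsProperColoring (spanningInduce G B) k c →
      ∃ e, KempeEquiv (spanningInduce G B) k c e ∧ e x ≠ e y)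
    (hc : IsProperColoring G k c) : ∃ c', KempeEquiv G k c c' ∧ c' x ≠ c' y := by
  by_contra! heq
  have proper (W : Set V) {f : V → Fin k} (hf : KempeEquiv G k c f) :
      IsProperColoring (spanningInduce G W) k f :=
    (hf.isProperColoring hc).mono (spanningCoe_induce_le _ _)
  obtain ⟨hxA, -⟩ : x ∈ A ∩ B := hS.ge (.inl rfl)
  obtain ⟨e, hce, he⟩ := hA c (proper A .refl)
  obtain ⟨c₁, hcc₁, -, b₁, hb₁⟩ := hAB.exists_chainAvoids hS heq hce he
  obtain ⟨f, hc₁f, hf⟩ := hB c₁ (proper B hcc₁)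
  obtain ⟨c₂, hc₁c₂, ⟨π, hπ⟩, b₂, hb₂⟩ := hAB.symm.exists_chainAvoids (Set.inter_comm A B ▸ hS)
    (fun c' hc' => heq c' (hcc₁.trans hc')) hc₁f hf
  have hcc₂ := hcc₁.trans hc₁c₂
  have hb₁' := chainAvoids_spanningInduce_perm π hπ hxA hb₁
  -- Renaming `π b₁` to `b₂` on the side `A` lets the two chains through `x` be swapped together.
  set σ := Equiv.swap (π b₁) b₂
  have hσ : σ (c₂ x) = c₂ x := Equiv.swap_apply_of_ne_of_ne hb₁'.1.symm hb₂.1.symm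
  obtain ⟨c₃, hc₂c₃, hc₃A, hc₃B⟩ := hAB.exists_kempeEquiv_perm σ (c := c₂) (by
    rw [hS]
    rintro v (rfl | rfl)
    exacts [hσ, heq c₂ hcc₂ ▸ hσ])
  have hcc₃ := hcc₂.trans hc₂c₃
  have hA₃ : ChainAvoids (spanningInduce G A) c₃ x y b₂ := by
    simpa only [σ, Equiv.swap_apply_left] using chainAvoids_spanningInduce_perm σ hc₃A hxA hb₁'
  have hB₃ : ChainAvoids (spanningInduce G B) c₃ x y b₂ :=
    chainAvoids_spanningInduce_perm 1 hc₃B (hS.ge (.inl rfl)).2 hb₂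
  obtain ⟨c₄, hc₃c₄, hne⟩ := (hAB.chainAvoids hS (heq c₃ hcc₃) hA₃ hB₃).exists_kempeEquiv_ne
    (heq c₃ hcc₃)
  exact hne (heq c₄ (hcc₃.trans hc₃c₄))

theorem Degenerate.exists_kempeEquiv_ne (hG : Degenerate (G ⊔ edge x y) d) (hdk : d < k)
    (hxy : x ≠ y) (hc : IsProperColoring G k c) : ∃ e, KempeEquiv G k c e ∧ e x ≠ e y := by
  obtain ⟨e, he⟩ := hG.exists_isProperColoring hdk
  have hG' : Degenerate G d := hG.mono le_sup_left
  exact ⟨e, hG'.kempeClass hdk c e hc (he.mono le_sup_left),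
    he (.inr ((edge_adj ..).2 ⟨.inl ⟨rfl, rfl⟩, hxy⟩))⟩

theorem IsSeparation.kempeClass_of_degenerate (hAB : IsSeparation G A B) (hS : A ∩ B = {x, y})
    (hxy : x ≠ y) (hA : Degenerate (spanningInduce G A ⊔ edge x y) d)
    (hB : Degenerate (spanningInduce G B ⊔ edge x y) d) (hdk : d < k) : KempeClass G k := by
  obtain ⟨hxA, hxB⟩ : x ∈ A ∩ B := hS.ge (.inl rfl)
  obtain ⟨hyA, hyB⟩ : y ∈ A ∩ B := hS.ge (.inr rfl)
  have hsep (c : V → Fin k) (hc : IsProperColoring G k c) :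
      ∃ c', KempeEquiv G k c c' ∧ c' x ≠ c' y :=
    hAB.exists_kempeEquiv_ne hS (fun _ => hA.exists_kempeEquiv_ne hdk hxy)
      (fun _ => hB.exists_kempeEquiv_ne hdk hxy) hc
  have hclique : (G ⊔ edge x y).IsClique (A ∩ B) := by
    rw [hS, isClique_pair]
    exact fun hxy => .inr ((edge_adj ..).2 ⟨.inl ⟨rfl, rfl⟩, hxy⟩)
  have hedge : KempeClass (G ⊔ edge x y) k :=
    (hAB.sup_edge hxA hyA).kempeClass_of_isClique hclique
      (spanningInduce_sup_edge hxA hyA ▸ hA.kempeClass hdk)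
      (spanningInduce_sup_edge hxB hyB ▸ hB.kempeClass hdk)
  intro c c' hc hc'
  obtain ⟨e, hce, he⟩ := hsep c hc
  obtain ⟨e', hce', he'⟩ := hsep c' hc'
  have hee' := hedge e e' ((hce.isProperColoring hc).sup_edge he)
    ((hce'.isProperColoring hc').sup_edge he')
  exact (hce.trans (hee'.mono le_sup_left)).trans hce'.symm

theorem Degenerate.sup_edge (hG : Degenerate G d) (hx : (G.neighborSet x).ncard < d) :
    Degenerate (G ⊔ edge x y) d := by
  intro S hS
  by_cases hxS : x ∈ S
  · have hsub : S ∩ (G ⊔ edge x y).neighborSet x ⊆ insert y (G.neighborSet x) := by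
      rintro u ⟨-, hu | hu⟩
      · exact .inr hu
      · exact .inl (by grind)
    exact ⟨x, hxS, ((Set.ncard_le_ncard hsub).trans (Set.ncard_insert_le _ _)).trans hx⟩
  · obtain ⟨v, hv, hcard⟩ := hG S hS
    refine ⟨v, hv, (Set.ncard_le_ncard ?_).trans hcard⟩
    rintro u ⟨huS, hu | hu⟩
    · exact ⟨huS, hu⟩
    · grind

theorem exists_ncard_inter_neighborSet_le (hG : G.Preconnected)
    (hdeg : ∀ v, (G.neighborSet v).ncard ≤ d + 1) (hne : S.Nonempty) (hS : S ≠ Set.univ) :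
    ∃ v ∈ S, (S ∩ G.neighborSet v).ncard ≤ d := by
  obtain ⟨u, hu⟩ := hne
  obtain ⟨w, hw⟩ := (Set.ne_univ_iff_exists_notMem S).1 hS
  obtain ⟨p⟩ := hG u w
  obtain ⟨e, -, hfst, hsnd⟩ := p.exists_boundary_dart S hu hw
  have hlt : (S ∩ G.neighborSet e.fst).ncard < (G.neighborSet e.fst).ncard :=
    Set.ncard_lt_ncard ⟨Set.inter_subset_right, fun h => hsnd (h e.adj).1⟩
  exact ⟨e.fst, hfst, Nat.le_of_lt_succ (hlt.trans_le (hdeg _))⟩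

theorem degenerate_of_preconnected_of_ncard_le (hG : G.Preconnected)
    (hdeg : ∀ v, (G.neighborSet v).ncard ≤ d + 1) (hv : (G.neighborSet v).ncard ≤ d) :
    Degenerate G d := by
  intro S hS
  by_cases huniv : S = Set.univ
  · exact ⟨v, huniv ▸ Set.mem_univ v, (Set.ncard_le_ncard Set.inter_subset_right).trans hv⟩
  · exact exists_ncard_inter_neighborSet_le hG hdeg hS huniv

theorem degenerate_spanningInduce_of_ne_univ (hG : G.Preconnected)
    (hdeg : ∀ v, (G.neighborSet v).ncard ≤ d + 1) (hA : A ≠ Set.univ) :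
    Degenerate (spanningInduce G A) d := by
  intro S hS
  have hsub (v : V) : S ∩ (spanningInduce G A).neighborSet v ⊆ S ∩ A ∩ G.neighborSet v :=
    Set.inter_assoc S A _ ▸ Set.inter_subset_inter_right S neighborSet_spanningInduce_subset
  rcases (S ∩ A).eq_empty_or_nonempty with hSA | hSA
  · obtain ⟨v, hv⟩ := hS
    exact ⟨v, hv, by simp [Set.subset_empty_iff.1 (by simpa [hSA] using hsub v)]⟩
  · obtain ⟨v, hv, hcard⟩ := exists_ncard_inter_neighborSet_le hG hdeg hSA
      fun h => hA (Set.eq_univ_of_univ_subset (h ▸ Set.inter_subset_right))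
    exact ⟨v, hv.1, (Set.ncard_le_ncard (hsub v)).trans hcard⟩

theorem degenerate_spanningInduce_sup_edge (hG : G.Preconnected)
    (hdeg : ∀ v, (G.neighborSet v).ncard ≤ d + 1) (hA : A ≠ Set.univ)
    (hlight : (A ∩ G.neighborSet x).ncard < d ∨ (A ∩ G.neighborSet y).ncard < d) :
    Degenerate (spanningInduce G A ⊔ edge x y) d := by
  have hdegen := degenerate_spanningInduce_of_ne_univ hG hdeg hA
  rcases hlight with h | h
  · exact hdegen.sup_edge ((Set.ncard_le_ncard neighborSet_spanningInduce_subset).trans_lt h)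
  · rw [edge_comm]
    exact hdegen.sup_edge ((Set.ncard_le_ncard neighborSet_spanningInduce_subset).trans_lt h)

theorem ncard_neighborSet_diff_le_one (hdeg : ∀ v, (G.neighborSet v).ncard ≤ d + 1)
    (hheavy : d ≤ (A ∩ G.neighborSet x).ncard) : (G.neighborSet x \ A).ncard ≤ 1 := by
  have := Set.ncard_inter_add_ncard_sdiff_eq_ncard (G.neighborSet x) A
  rw [Set.inter_comm] at this
  have := hdeg x
  omega

theorem exists_notMem_forall_adj_eq (hdeg : ∀ v, (G.neighborSet v).ncard ≤ d + 1)
    (hA : A ≠ Set.univ) (hheavy : d ≤ (A ∩ G.neighborSet x).ncard) :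
    ∃ u ∉ A, ∀ w, G.Adj x w → w ∉ A → w = u := by
  rcases (G.neighborSet x \ A).eq_empty_or_nonempty with hempty | ⟨u, hu⟩
  · obtain ⟨u, hu⟩ := (Set.ne_univ_iff_exists_notMem A).1 hA
    exact ⟨u, hu, fun w hxw hw => (hempty.le ⟨hxw, hw⟩).elim⟩
  · have hunique := Set.ncard_le_one_iff_subsingleton.1
      (ncard_neighborSet_diff_le_one hdeg hheavy)
    exact ⟨u, hu.2, fun w hxw hw => hunique ⟨hxw, hw⟩ hu⟩

namespace IsSeparation

theorem kempeClass_of_ncard_inter_lt (hAB : IsSeparation G A B) (hS : A ∩ B = {x, y}) (hxy : x ≠ y)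
    (hG : G.Preconnected) (hdeg : ∀ v, (G.neighborSet v).ncard ≤ d + 1)
    (hA : A ≠ Set.univ) (hB : B ≠ Set.univ)
    (hlightA : (A ∩ G.neighborSet x).ncard < d ∨ (A ∩ G.neighborSet y).ncard < d)
    (hlightB : (B ∩ G.neighborSet x).ncard < d ∨ (B ∩ G.neighborSet y).ncard < d) :
    KempeClass G (d + 1) :=
  hAB.kempeClass_of_degenerate hS hxy (degenerate_spanningInduce_sup_edge hG hdeg hA hlightA)
    (degenerate_spanningInduce_sup_edge hG hdeg hB hlightB) d.lt_succ_self

theorem kempeClass_of_le_ncard_inter (hAB : IsSeparation G A B) (hS : A ∩ B = {x, y}) (hxy : x ≠ y)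
    (hG : G.Preconnected) (hd : 3 ≤ d) (hdeg : ∀ v, (G.neighborSet v).ncard = d + 1)
    (hA : A ≠ Set.univ) (hx : d ≤ (A ∩ G.neighborSet x).ncard)
    (hy : d ≤ (A ∩ G.neighborSet y).ncard) : KempeClass G (d + 1) := by
  have hdeg' (v : V) := (hdeg v).le
  obtain ⟨u, huA, huniq⟩ := exists_notMem_forall_adj_eq hdeg' hA hx
  have hxA : x ∈ A := (hS.ge (.inl rfl)).1
  have huB : u ∈ B := (hAB.mem_or_mem u).resolve_left huA
  have hS' : insert u A ∩ (B \ {x}) = {u, y} := by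
    grind
  have hNu : insert u A ∩ G.neighborSet u ⊆ {x, y} := by
    rintro w ⟨rfl | hwA, huw⟩
    · exact (huw.ne rfl).elim
    · exact hS.le ⟨hwA, hAB.symm.neighborSet_subset_left huA huw⟩
  have hNu_card := (Set.ncard_le_ncard hNu).trans_eq (Set.ncard_pair hxy)
  have hNy : B \ {x} ∩ G.neighborSet y ⊆ G.neighborSet y \ A := by
    rintro w ⟨⟨hwB, hwx⟩, hyw⟩
    exact ⟨hyw, fun hwA => (hS.le ⟨hwA, hwB⟩).elim hwx hyw.ne'⟩
  have hNy_card := (Set.ncard_le_ncard hNy).trans (ncard_neighborSet_diff_le_one hdeg' hy)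
  refine (hAB.insert_diff_singleton hxA huniq).kempeClass_of_ncard_inter_lt hS' ?_ hG hdeg' ?_ ?_
    (.inl (by omega)) (.inr (by omega))
  · rintro rfl
    exact huA (hS.ge (.inr rfl)).1
  · intro huniv
    rw [huniv, Set.univ_inter, hdeg] at hNu_card
    omega
  · exact (Set.ne_univ_iff_exists_notMem _).2 ⟨x, fun h => h.2 rfl⟩

theorem kempeClass (hAB : IsSeparation G A B) (hS : (A ∩ B).ncard = 2) (hA : A ≠ Set.univ)
    (hB : B ≠ Set.univ) (hG : G.Preconnected) (hd : 3 ≤ d)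
    (hdeg : ∀ v, (G.neighborSet v).ncard = d + 1) : KempeClass G (d + 1) := by
  obtain ⟨x, y, hxy, hS⟩ := Set.ncard_eq_two.1 hS
  by_cases hlightA : (A ∩ G.neighborSet x).ncard < d ∨ (A ∩ G.neighborSet y).ncard < d
  · by_cases hlightB : (B ∩ G.neighborSet x).ncard < d ∨ (B ∩ G.neighborSet y).ncard < d
    · exact hAB.kempeClass_of_ncard_inter_lt hS hxy hG (fun v => (hdeg v).le) hA hB hlightA hlightB
    · push Not at hlightB
      exact hAB.symm.kempeClass_of_le_ncard_inter (Set.inter_comm A B ▸ hS) hxy hG hd hdeg hB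
        hlightB.1 hlightB.2
  · push Not at hlightA
    exact hAB.kempeClass_of_le_ncard_inter hS hxy hG hd hdeg hA hlightA.1 hlightA.2

end IsSeparation

end Finite

theorem exists_isSeparation_of_not_preconnected (hS : ¬ (G.induce Sᶜ).Preconnected) :
    ∃ A B, IsSeparation G A B ∧ A ∩ B = S ∧ A ≠ Set.univ ∧ B ≠ Set.univ := by
  simp only [Preconnected, not_forall] at hS
  obtain ⟨u, v, huv⟩ := hS
  set C : Set V := Subtype.val '' ((G.induce Sᶜ).connectedComponentMk u).supp with hC
  have mem_C {w : V} : w ∈ C ↔ ∃ hw : w ∈ Sᶜ, (G.induce Sᶜ).Reachable ⟨w, hw⟩ u := by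
    simp [hC]
  have hadj {s t : V} (hst : G.Adj s t) (hs : s ∈ C) (ht : t ∉ S) : t ∈ C := by
    obtain ⟨hsS, hreach⟩ := mem_C.1 hs
    have hts : (G.induce Sᶜ).Adj ⟨t, ht⟩ ⟨s, hsS⟩ := hst.symm
    exact mem_C.2 ⟨ht, hts.reachable.trans hreach⟩
  refine ⟨C ∪ S, Cᶜ, ⟨fun w => ?_, fun s t hst => ?_⟩, ?_, ?_, ?_⟩
  · tauto
  · have := @hadj s t hst
    have := @hadj t s hst.symm
    grind
  · grind
  · refine (Set.ne_univ_iff_exists_notMem _).2 ⟨v, ?_⟩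
    rintro (hv | hv)
    exacts [huv (mem_C.1 hv).2.symm, v.2 hv]
  · exact (Set.ne_univ_iff_exists_notMem _).2 ⟨u, not_not.2 (mem_C.2 ⟨u.2, .refl _⟩)⟩

theorem kempeClass_of_not_preconnected_induce_compl [Finite V] (hG : G.Preconnected) (hd : 3 ≤ d)
    (hdeg : ∀ v, (G.neighborSet v).ncard = d + 1) (hcard : S.ncard ≤ 2)
    (hS : ¬ (G.induce Sᶜ).Preconnected) : KempeClass G (d + 1) := by
  obtain ⟨A, B, hAB, rfl, hA, hB⟩ := exists_isSeparation_of_not_preconnected hS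
  obtain ⟨v, hv⟩ := (Set.ne_univ_iff_exists_notMem B).1 hB
  have hlt : 2 < A.ncard := by
    have := hdeg v ▸ Set.ncard_le_ncard (hAB.neighborSet_subset_left hv)
    omega
  obtain ⟨B', hAB', hcard', hB'⟩ := hAB.exists_ncard_inter_eq hcard hlt
  exact hAB'.kempeClass hcard' hA hB' hG hd hdeg

theorem exists_not_preconnected_of_not_threeConnected [Fintype V] (hV : 3 < Fintype.card V)
    (hG : ¬ ThreeConnected G) : ∃ S : Set V, S.ncard ≤ 2 ∧ ¬ (G.induce Sᶜ).Preconnected := by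
  simp only [ThreeConnected, hV, true_and, not_forall] at hG
  obtain ⟨S, hS, hconn⟩ := hG
  refine ⟨S, hS, fun hpre => hconn ?_⟩
  have hne : Sᶜ.Nonempty := by
    rw [← Set.ncard_pos, Set.ncard_compl, Nat.card_eq_fintype_card]
    omega
  exact { preconnected := hpre, nonempty := hne.to_subtype }

end KempeClasses

theorem stmt8_general {V : Type*} [Fintype V] (k : ℕ) (hk : 4 ≤ k) (G : SimpleGraph V)
    [DecidableRel G.Adj] (hdeg : G.maxDegree ≤ k) (hconn : G.Connected)
    (hn3c : ¬ ThreeConnected G) : KempeClass G k := by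
  obtain ⟨d, rfl⟩ : ∃ d, k = d + 1 := ⟨k - 1, by omega⟩
  have ncard_eq (v : V) : (G.neighborSet v).ncard = G.degree v := by
    rw [Set.ncard_eq_toFinset_card', ← card_neighborSet_eq_degree, Set.toFinset_card]
  have hle (v : V) : (G.neighborSet v).ncard ≤ d + 1 :=
    (ncard_eq v).trans_le ((G.degree_le_maxDegree v).trans hdeg)
  by_cases hlow : ∃ v, (G.neighborSet v).ncard ≤ d
  · obtain ⟨v, hv⟩ := hlow
    exact (degenerate_of_preconnected_of_ncard_le hconn.preconnected hle hv).kempeClass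
      d.lt_succ_self
  push Not at hlow
  have hreg (v : V) : (G.neighborSet v).ncard = d + 1 := (hle v).antisymm (hlow v)
  obtain ⟨v⟩ := hconn.nonempty
  have hcard : 3 < Fintype.card V := by
    have := (hreg v).symm.trans (ncard_eq v) ▸ G.degree_lt_card_verts v
    omega
  obtain ⟨S, hS, hpre⟩ := exists_not_preconnected_of_not_threeConnected hcard hn3c
  exact kempeClass_of_not_preconnected_induce_compl hconn.preconnected (by omega) hreg hS hpre

/-- for `k ≥ 4`, a connected `k`-regular graph that is not 3-connected
has all its proper `k`-colourings in a single Kempe class. -/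
theorem stmt8 {V : Type*} [Fintype V] (k : ℕ) (hk : 4 ≤ k) (G : SimpleGraph V)
    [DecidableRel G.Adj] (hreg : G.IsRegularOfDegree k) (hconn : G.Connected)
    (hn3c : ¬ ThreeConnected G) : KempeClass G k := by
  exact stmt8_general k hk G (G.maxDegree_le_of_forall_degree_le _ fun v => (hreg v).le) hconn hn3c
end
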